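/- arXiv:1806.02574 — 3 statements merged into one kernel-verified Lean document; each statement's English description precedes it below -/
import Mathlib

section
/- There exist a constant c > 0 and a natural number d₀ such that for every integer d ≥ d₀ the following holds: for every set V of 2d points in general position in ℝ^d, the number of unordered pairs {B, C} of disjoint d-element subsets of V such that the relative interiors of the convex hulls of B and of C have a common point is at least c · 2^d · √d. (This is the lower bound cr_d(K_{2d}^d) = Ω(2^d √d) on the d-dimensional rectilinear crossing number of the complete d-uniform hypergraph K_{2d}^d.) -/
/-! The affine dependences of the `2d` points form a `(d - 1)`-dimensional space `U` of weight vectors,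
any `d - 1` coordinates of which determine the vector (`isUniform_affineDependences`). A dependence
with `d` positive and `d` negative weights gives a crossing pair (`crossing_of_mem_balancedSets`), so
it suffices to find many sign patterns of `U` with exactly `d` positive signs.

Any `d - 3` coordinates can be completed by one more coordinate so that the vector of `U` vanishing
exactly there is halving, i.e. has nearly as many positive as negative coordinates
(`exists_halving`). Perturbing it gives all signs on the `d - 2` zero coordinates
(`exists_perturb`). Fix a set `Y` of `d - 3 - t` points, where `t` is about `d / 2`. For a `t`-set `T`
disjoint from `Y`, a halving vector vanishing on `T ∪ Y` can be perturbed with arbitrary signs on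
`T`, the signs on `Y` being used to keep exactly `d` positive coordinates. Hence the balanced sign
patterns, restricted to the complement of `Y`, contain a full cube in the directions of every
`t`-set `T` (`exists_cube`). A family with this property has at least `C(n, t)` members, with `n` the
size of the complement of `Y`, by Pajor's inequality applied to the complementary family
(`card_choose_le_of_cubes`).

Here `n` is about `3d / 2`, and `C(3d / 2, d / 2)` exceeds a constant times `5 ^ (d / 2)`
(`five_pow_le_choose`), which is larger than `2 ^ d * √d` up to a constant factor. -/

noncomputable section

/-- Points of `ℝ^d`. -/
abbrev Pt (d : ℕ) := EuclideanSpace ℝ (Fin d)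

/-- A finite point set is in general position in `ℝ^d` if every subset of at most
`d + 1` of its points is affinely independent. -/
def GenPos (d : ℕ) (V : Finset (Pt d)) : Prop :=
  ∀ S : Finset (Pt d), S ⊆ V → S.card ≤ d + 1 →
    AffineIndependent ℝ ((↑) : {x // x ∈ (S : Set (Pt d))} → Pt d)

/-- Two vertex-disjoint point sets form a crossing pair of simplices if the
relative (intrinsic) interiors of their convex hulls have a common point. -/
def CrossingPair (d : ℕ) (B C : Finset (Pt d)) : Prop :=
  Disjoint B C ∧
    (intrinsicInterior ℝ (convexHull ℝ (B : Set (Pt d))) ∩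
      intrinsicInterior ℝ (convexHull ℝ (C : Set (Pt d)))).Nonempty

/-- The set of unordered pairs `{B, C}` of disjoint `d`-element subsets of `V`
whose simplices cross: the crossing pairs of hyperedges of `K_{2d}^d`. -/
def crossingHyperedgePairs (d : ℕ) (V : Finset (Pt d)) : Set (Sym2 (Finset (Pt d))) :=
  {p | ∃ B C : Finset (Pt d), p = s(B, C) ∧ B ⊆ V ∧ C ⊆ V ∧
        B.card = d ∧ C.card = d ∧ CrossingPair d B C}


/-! ### Set families containing many cubes -/

/-- If for every `t`-set `T` the family `A` contains a cube `{R ∪ P | P ⊆ T}`, it has at least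
`C(n, t)` members. This is Pajor's inequality for the complementary family: the complement of `A`
does not shatter the complement of `T`, because the trace `R` is missing. -/
theorem card_choose_le_of_cubes {α : Type*} [Fintype α] [DecidableEq α]
    (A : Finset (Finset α)) (t : ℕ)
    (h : ∀ T : Finset α, T.card = t → ∃ R : Finset α, Disjoint R T ∧ ∀ P ⊆ T, R ∪ P ∈ A) :
    (Fintype.card α).choose t ≤ A.card := by
  have h1 := Finset.card_le_card_shatterer Aᶜ
  have h2 : ((Finset.univ.powersetCard t).image (compl : Finset α → Finset α)) ⊆
      (Aᶜ.shatterer)ᶜ := by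
    intro S hS
    obtain ⟨T, hT, rfl⟩ := Finset.mem_image.1 hS
    obtain ⟨R, hR, hA⟩ := h T (Finset.mem_powersetCard.1 hT).2
    simp only [Finset.mem_compl, Finset.mem_shatterer]
    intro hsh
    obtain ⟨B, hB, hBR⟩ := hsh (t := R) (fun i hi => Finset.mem_compl.2
      (Finset.disjoint_left.1 hR hi))
    refine Finset.mem_compl.1 hB ?_
    convert hA (T ∩ B) Finset.inter_subset_left
    rw [← hBR]
    ext i
    by_cases hi : i ∈ T <;> simp [hi]
  have h3 := Finset.card_le_card h2
  rw [Finset.card_image_of_injective _ compl_injective, Finset.card_powersetCard,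
    Finset.card_univ, Finset.card_compl] at h3
  rw [Finset.card_compl] at h1
  have h4 := Finset.card_le_univ A
  have h5 := Finset.card_le_univ Aᶜ.shatterer
  omega

theorem choose_add_three_ge (N s : ℕ) :
    3 * N.choose s + N.choose (s + 1) ≤ (N + 3).choose (s + 1) := by
  have h1 : N.choose s ≤ (N + 1).choose s := Nat.choose_le_choose s (by omega)
  have h2 : N.choose s ≤ (N + 2).choose s := Nat.choose_le_choose s (by omega)
  have e1 := Nat.choose_succ_succ' N s
  have e2 := Nat.choose_succ_succ' (N + 1) s
  have e3 := Nat.choose_succ_succ' (N + 2) s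
  simp only [Nat.add_assoc, Nat.reduceAdd] at *
  omega

theorem five_pow_le_choose (s : ℕ) : 5 ^ s ≤ (3 * s + 9).choose s := by
  induction s with
  | zero => simp
  | succ s ih =>
    have m1 := choose_add_three_ge (3 * s + 9) s
    have m3 := Nat.choose_succ_right_eq (3 * s + 9) s
    have e2 : 3 * s + 9 - s = 2 * s + 9 := by omega
    rw [e2] at m3
    have m4 : 2 * (3 * s + 9).choose s ≤ (3 * s + 9).choose (s + 1) := by
      by_contra! hc
      nlinarith
    have e : 3 * (s + 1) + 9 = (3 * s + 9) + 3 := by ring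
    rw [e, pow_succ]
    omega

/-! ### Relative interior of a simplex -/

/-- Convex combinations of affinely independent points with positive weights lie in the intrinsic
interior of the convex hull: after extending to an affine basis of the space, the barycentric
coordinates are continuous, and on the affine span of `B` their positivity at the points of `B`
forces membership in the hull. -/
theorem mem_intrinsicInterior_convexHull {d : ℕ} {B : Finset (Pt d)}
    (hB : AffineIndependent ℝ ((↑) : {x // x ∈ (B : Set (Pt d))} → Pt d))
    (w : Pt d → ℝ) (hw : ∀ b ∈ B, 0 < w b) (h1 : ∑ b ∈ B, w b = 1) :
    ∑ b ∈ B, w b • b ∈ intrinsicInterior ℝ (convexHull ℝ (B : Set (Pt d))) := by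
  classical
  obtain ⟨t, hBt, hti, htop⟩ := exists_subset_affineIndependent_affineSpan_eq_top hB
  let β : AffineBasis t ℝ (Pt d) := ⟨((↑) : t → Pt d), hti, by simpa using htop⟩
  have key : ∀ v : Pt d → ℝ, ∑ b ∈ B, v b = 1 → ∀ (b : Pt d) (hb : b ∈ B),
      β.coord ⟨b, hBt hb⟩ (∑ b ∈ B, v b • b) = v b := by
    intro v hv b hb
    have e : ∑ b ∈ B, v b • b = B.affineCombination ℝ id v := by
      rw [Finset.affineCombination_eq_linear_combination _ _ _ hv]; rfl
    rw [e, Finset.map_affineCombination _ _ _ hv,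
      Finset.affineCombination_eq_linear_combination _ _ _ hv, Finset.sum_eq_single_of_mem b hb]
    · have := β.coord_apply_eq ⟨b, hBt hb⟩
      simp only [Function.comp, id]
      erw [this]; simp
    · intro c hc hcb
      have := β.coord_apply_ne (i := ⟨b, hBt hb⟩) (j := ⟨c, hBt hc⟩) (by simpa using hcb.symm)
      simp only [Function.comp, id]
      erw [this]; simp
  have hconv : ∀ v : Pt d → ℝ, (∀ b ∈ B, 0 ≤ v b) → ∑ b ∈ B, v b = 1 →
      ∑ b ∈ B, v b • b ∈ convexHull ℝ (B : Set (Pt d)) := by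
    intro v hv hv1
    exact (convex_convexHull ℝ _).sum_mem hv hv1 (fun b hb => subset_convexHull ℝ _ hb)
  have hmem := hconv w (fun b hb => (hw b hb).le) h1
  rw [mem_intrinsicInterior]
  refine ⟨⟨_, subset_affineSpan ℝ _ hmem⟩, ?_, rfl⟩
  rw [mem_interior]
  refine ⟨{y | ∀ b : B, 0 < β.coord ⟨b, hBt b.2⟩ y}, ?_, ?_, ?_⟩
  · rintro ⟨y, hy⟩ hpos
    rw [affineSpan_convexHull] at hy
    have hy' : y ∈ affineSpan ℝ (Set.range ((↑) : B → Pt d)) := by simpa using hy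
    obtain ⟨v, hv, rfl⟩ := eq_affineCombination_of_mem_affineSpan_of_fintype hy'
    have e : Finset.univ.affineCombination ℝ ((↑) : B → Pt d) v =
        ∑ b ∈ B, (fun b => if h : b ∈ B then v ⟨b, h⟩ else 0) b • b := by
      rw [Finset.affineCombination_eq_linear_combination _ _ _ hv, ← Finset.sum_coe_sort B]
      simp
    have hv1 : ∑ b ∈ B, (fun b => if h : b ∈ B then v ⟨b, h⟩ else 0) b = 1 := by
      rw [← hv, ← Finset.sum_coe_sort B]
      simp
    simp only [Set.mem_preimage, Set.mem_ofPred_eq] at hpos ⊢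
    rw [e] at hpos ⊢
    refine hconv _ (fun b hb => ?_) hv1
    have := hpos ⟨b, hb⟩
    rw [key _ hv1 b hb] at this
    exact this.le
  · simp only [Set.ofPred_forall]
    refine isOpen_iInter_of_finite fun b => ?_
    exact isOpen_lt continuous_const ((continuous_barycentric_coord β _).comp continuous_subtype_val)
  · intro b
    have := key w h1 b b.2
    simp only
    rw [this]
    exact hw b b.2

/-! ### Sign patterns of uniform subspaces -/

/-- The matroid of coordinate functionals on `U` is uniform of rank `k`: restriction of vectors of
`U` to any `k` coordinates is a bijection onto all weights on these coordinates. -/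
def IsUniform {ι : Type*} (U : Submodule ℝ (ι → ℝ)) (k : ℕ) : Prop :=
  ∀ A : Finset ι, A.card = k →
    (∀ u ∈ U, (∀ i ∈ A, u i = 0) → u = 0) ∧ ∀ w : ι → ℝ, ∃ u ∈ U, ∀ i ∈ A, u i = w i

/-- Discrete intermediate value argument: as `j` runs through `I` in increasing order of `r`, the
signed count `∑ ε i * sign (r i - r j)` passes from `∑ ε` to `-∑ ε` (up to end terms) in steps of
size at most two. -/
theorem exists_balanced_aux {ι : Type*} (I : Finset ι) (hI : I.Nonempty) (r : ι → ℝ)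
    (hr : Set.InjOn r I) (ε : ι → ℤ) (hε : ∀ i ∈ I, ε i = 1 ∨ ε i = -1) (h0 : 0 ≤ ∑ i ∈ I, ε i) :
    ∃ j ∈ I, |∑ i ∈ I, ε i * (SignType.sign (r i - r j) : ℤ)| ≤ 1 := by
  classical
  -- `F j` and `G j` are the values of the signed count just below and just above `r j`.
  let F : ι → ℤ := fun j => ∑ i ∈ I, ε i * (if r j ≤ r i then 1 else -1)
  let G : ι → ℤ := fun j => ∑ i ∈ I, ε i * (if r j < r i then 1 else -1)
  obtain ⟨j₀, hj₀, hmin⟩ := I.exists_min_image r hI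
  have hF0 : 0 ≤ F j₀ := by
    have : F j₀ = ∑ i ∈ I, ε i := Finset.sum_congr rfl fun i hi => by simp [hmin i hi]
    rwa [this]
  obtain ⟨j, hj, hmax⟩ := (I.filter fun j => 0 ≤ F j).exists_max_image r
    ⟨j₀, Finset.mem_filter.2 ⟨hj₀, hF0⟩⟩
  obtain ⟨hjI, hFj⟩ := Finset.mem_filter.1 hj
  have hG : G j ≤ 0 := by
    by_cases hK : (I.filter fun i => r j < r i).Nonempty
    · obtain ⟨k, hk, hkmin⟩ := (I.filter fun i => r j < r i).exists_min_image r hK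
      obtain ⟨hkI, hjk⟩ := Finset.mem_filter.1 hk
      have hGF : G j = F k := Finset.sum_congr rfl fun i hi => by
        have : r j < r i ↔ r k ≤ r i :=
          ⟨fun h => hkmin i (Finset.mem_filter.2 ⟨hi, h⟩), fun h => hjk.trans_le h⟩
        simp [this]
      by_contra! hc
      exact absurd (hmax k (Finset.mem_filter.2 ⟨hkI, by omega⟩)) (not_le.2 hjk)
    · have : G j = - ∑ i ∈ I, ε i := by
        rw [← Finset.sum_neg_distrib]
        refine Finset.sum_congr rfl fun i hi => ?_
        rw [if_neg fun h => hK ⟨i, Finset.mem_filter.2 ⟨hi, h⟩⟩]; ring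
      omega
  have hD : ∀ i ∈ I, (SignType.sign (r i - r j) : ℤ) =
      (if r j ≤ r i then 1 else -1) - (if i = j then 1 else 0) ∧
      (SignType.sign (r i - r j) : ℤ) =
      (if r j < r i then 1 else -1) + (if i = j then 1 else 0) := by
    intro i hi
    by_cases hij : i = j
    · subst hij; simp
    · have hne : r i ≠ r j := fun h => hij (hr hi hjI h)
      rcases lt_or_gt_of_ne hne with h | h
      · simp [hij, not_le.2 h, not_lt.2 h.le, sign_neg (sub_neg.2 h)]
      · simp [hij, h, h.le, sign_pos (sub_pos.2 h)]
  refine ⟨j, hjI, ?_⟩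
  have e1 : ∑ i ∈ I, ε i * (SignType.sign (r i - r j) : ℤ) = F j - ε j := by
    rw [Finset.sum_congr rfl fun i hi => by rw [(hD i hi).1, mul_sub], Finset.sum_sub_distrib]
    simp [F, hjI]
  have e2 : ∑ i ∈ I, ε i * (SignType.sign (r i - r j) : ℤ) = G j + ε j := by
    rw [Finset.sum_congr rfl fun i hi => by rw [(hD i hi).2, mul_add], Finset.sum_add_distrib]
    simp [G, hjI]
  rw [abs_le]
  rcases hε j hjI with h | h <;> constructor <;> omega

theorem exists_balanced {ι : Type*} (I : Finset ι) (hI : I.Nonempty) (r : ι → ℝ)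
    (hr : Set.InjOn r I) (ε : ι → ℤ) (hε : ∀ i ∈ I, ε i = 1 ∨ ε i = -1) :
    ∃ j ∈ I, |∑ i ∈ I, ε i * (SignType.sign (r i - r j) : ℤ)| ≤ 1 := by
  rcases le_total 0 (∑ i ∈ I, ε i) with h | h
  · exact exists_balanced_aux I hI r hr ε hε h
  · obtain ⟨j, hj, h1⟩ := exists_balanced_aux I hI r hr (fun i => - ε i)
      (fun i hi => by rcases hε i hi with h | h <;> simp [h]) (by simpa using h)
    refine ⟨j, hj, ?_⟩
    simpa [neg_mul, Finset.sum_neg_distrib, abs_neg] using h1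

/-- A halving vector: any `k - 2` coordinates can be completed by one more coordinate `x` so that the
vector of `U` vanishing exactly there has nearly as many positive as negative coordinates. The
vectors vanishing on `Z` form a plane; with a basis `f, g` such that `g` has no zero off `Z`, the
vector `f - r • g` has coordinates `g i * (f i / g i - r)`, and `r` is moved through the ratios. -/
theorem exists_halving {ι : Type*} [Fintype ι] [DecidableEq ι] {U : Submodule ℝ (ι → ℝ)} {k : ℕ}
    (hU : IsUniform U k) (hk : k + 1 ≤ Fintype.card ι) (Z : Finset ι) (hZ : Z.card + 2 = k) :
    ∃ x ∉ Z, ∃ v ∈ U, (∀ i, v i = 0 ↔ i ∈ insert x Z) ∧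
      |∑ i, (SignType.sign (v i) : ℤ)| ≤ 1 := by
  have hcc := Finset.card_add_card_compl Z
  obtain ⟨a, ha, b, hb, hab⟩ := Finset.one_lt_card.1 (show 1 < Zᶜ.card by omega)
  rw [Finset.mem_compl] at ha hb
  have hun : ∀ u ∈ U, ∀ i j, i ∉ Z → j ∉ Z → i ≠ j → (∀ l ∈ Z, u l = 0) → u i = 0 → u j = 0 →
      u = 0 := by
    intro u hu i j hi hj hij h1 h2 h3
    refine (hU (insert i (insert j Z)) ?_).1 u hu ?_
    · rw [Finset.card_insert_of_notMem (by simp [hij, hi]), Finset.card_insert_of_notMem hj]; omega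
    · simpa using ⟨h2, h3, h1⟩
  have hex : ∀ c : ι, ∃ u ∈ U, (∀ l ∈ Z, u l = 0) ∧ u a = (Pi.single c (1 : ℝ) : ι → ℝ) a ∧
      u b = (Pi.single c (1 : ℝ) : ι → ℝ) b := by
    intro c
    obtain ⟨u, hu, h⟩ := (hU (insert a (insert b Z)) (by
      rw [Finset.card_insert_of_notMem (by simp [hab, ha]), Finset.card_insert_of_notMem hb]
      omega)).2 (fun i => if i ∈ Z then 0 else (Pi.single c (1 : ℝ) : ι → ℝ) i)
    refine ⟨u, hu, fun l hl => ?_, ?_, ?_⟩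
    · rw [h l (by simp [hl]), if_pos hl]
    · rw [h a (by simp), if_neg ha]
    · rw [h b (by simp), if_neg hb]
  obtain ⟨f, hf, hfZ, hfa, hfb⟩ := hex a
  obtain ⟨f', hf', hfZ', hfa', hfb'⟩ := hex b
  simp only [Pi.single_eq_same, Pi.single_eq_of_ne hab, Pi.single_eq_of_ne hab.symm]
    at hfa hfb hfa' hfb'
  -- A generic combination of `f` and `f'` vanishes nowhere off `Z`.
  obtain ⟨s, hs⟩ := Infinite.exists_notMem_finset (Finset.univ.image fun i => - f' i / f i)
  set g : ι → ℝ := f' + s • f with hg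
  have hgU : g ∈ U := U.add_mem hf' (U.smul_mem _ hf)
  have hgi : ∀ i, g i = f' i + s * f i := fun i => by simp [hg]
  have hg0 : ∀ i, i ∉ Z → g i ≠ 0 := by
    intro i hi h
    rw [hgi] at h
    by_cases hfi : f i = 0
    · by_cases hib : i = b
      · subst hib; rw [hfb', hfi] at h; norm_num at h
      · have := hun f hf i b hi hb hib hfZ hfi hfb
        rw [this] at hfa; simp at hfa
    · apply hs
      refine Finset.mem_image.2 ⟨i, Finset.mem_univ _, ?_⟩
      field_simp
      linarith
  set r : ι → ℝ := fun i => f i / g i with hr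
  have hvi : ∀ j i, i ∉ Z → (f - r j • g) i = g i * (r i - r j) := by
    intro j i hi
    have := hg0 i hi
    simp only [hr, Pi.sub_apply, Pi.smul_apply, smul_eq_mul]
    field_simp
  have hvZ : ∀ j, ∀ i ∈ Z, (f - r j • g) i = 0 := by
    intro j i hi
    simp [hgi, hfZ i hi, hfZ' i hi]
  have hvU : ∀ j, f - r j • g ∈ U := fun j => U.sub_mem hf (U.smul_mem _ hgU)
  have hrinj : ∀ i j, i ∉ Z → j ∉ Z → r i = r j → i = j := by
    intro i j hi hj hij
    by_contra hne
    have h0 := hun _ (hvU j) i j hi hj hne (hvZ j) (by rw [hvi j i hi, hij]; ring)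
      (by rw [hvi j j hj]; ring)
    have h1 := congrFun h0 a
    have h2 := congrFun h0 b
    simp only [Pi.sub_apply, Pi.smul_apply, smul_eq_mul, hgi, hfa, hfb, hfa', hfb',
      Pi.zero_apply] at h1 h2
    have h3 : r j = 0 := by linarith
    rw [h3] at h1; norm_num at h1
  obtain ⟨x, hx, hbal⟩ := exists_balanced Zᶜ ⟨a, by simpa using ha⟩ r
    (fun i hi j hj h => hrinj i j (by simpa using hi) (by simpa using hj) h)
    (fun i => (SignType.sign (g i) : ℤ)) (fun i hi => by
      rcases lt_or_gt_of_ne (hg0 i (by simpa using hi)) with h | h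
      · right; simp [sign_neg h]
      · left; simp [sign_pos h])
  rw [Finset.mem_compl] at hx
  refine ⟨x, hx, _, hvU x, fun i => ?_, ?_⟩
  · rw [Finset.mem_insert]
    constructor
    · intro h
      by_contra! hc
      rw [hvi x i hc.2, mul_eq_zero, or_iff_right (hg0 i hc.2), sub_eq_zero] at h
      exact hc.1 (hrinj i x hc.2 hx h)
    · rintro (rfl | h)
      · rw [hvi i i hx]; ring
      · exact hvZ x i h
  · convert hbal using 2
    rw [← Finset.sum_add_sum_compl Z, Finset.sum_eq_zero fun i hi => by rw [hvZ x i hi]; simp,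
      zero_add]
    refine Finset.sum_congr rfl fun i hi => ?_
    rw [hvi x i (by simpa using hi), sign_mul]
    simp

/-- A vector with at most `k` zero coordinates can be perturbed so that its zero coordinates
acquire arbitrary signs and its nonzero coordinates keep theirs. -/
theorem exists_perturb {ι : Type*} [Fintype ι] [DecidableEq ι] {U : Submodule ℝ (ι → ℝ)} {k : ℕ}
    (hU : IsUniform U k) (hk : k ≤ Fintype.card ι) (S : Finset ι) (hS : S.card ≤ k)
    {v : ι → ℝ} (hv : v ∈ U) (hvS : ∀ i, v i = 0 ↔ i ∈ S) (Q : Finset ι) (hQ : Q ⊆ S) :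
    ∃ u ∈ U, ∀ i, u i ≠ 0 ∧ (0 < u i ↔ 0 < v i ∨ i ∈ Q) := by
  obtain ⟨A, hSA, -, hA⟩ := Finset.exists_subsuperset_card_eq (Finset.subset_univ S) hS
    (by simpa using hk)
  obtain ⟨w, hw, hwA⟩ := (hU A hA).2 (fun i => if i ∈ Q then 1 else -1)
  have hev : ∀ᶠ δ : ℝ in nhdsWithin 0 (Set.Ioi 0), ∀ i, i ∉ S →
      0 < v i * (v i + δ * w i) := by
    refine Filter.eventually_all.2 fun i => ?_
    by_cases hi : i ∈ S
    · simp [hi]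
    · have hc : Continuous fun δ : ℝ => v i * (v i + δ * w i) := by fun_prop
      have h0 : 0 < v i * (v i + 0 * w i) := by
        have : v i ≠ 0 := fun h => hi ((hvS i).1 h)
        simpa using this
      filter_upwards [nhdsWithin_le_nhds (hc.continuousAt.eventually (lt_mem_nhds h0))] with δ h _
      exact h
  obtain ⟨δ, hδ, hδ0⟩ := (hev.and self_mem_nhdsWithin).exists
  refine ⟨v + δ • w, U.add_mem hv (U.smul_mem _ hw), fun i => ?_⟩
  simp only [Pi.add_apply, Pi.smul_apply, smul_eq_mul]
  by_cases hi : i ∈ S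
  · rw [(hvS i).2 hi, hwA i (hSA hi)]
    by_cases hiQ : i ∈ Q
    · simp [hiQ, hδ0, hδ0.ne']
    · simp [hiQ, hδ0.ne', hδ0.le]
  · have h := hδ i hi
    have hiQ : i ∉ Q := fun h => hi (hQ h)
    refine ⟨fun h' => by simp [h'] at h, ?_⟩
    simp only [hiQ, or_false]
    exact ⟨fun h' => pos_of_mul_pos_left h h'.le, fun h' => pos_of_mul_pos_right h h'.le⟩

/-- The sign patterns of `U` with `k + 1` positive coordinates, restricted to the complement of `Y`,
contain a full cube `{R ∪ P | P ⊆ T}`: starting from a halving vector vanishing on `T ∪ Y ∪ {x}`, the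
signs on `T` are chosen freely, and the signs on `Y` are used to restore the number of positive
coordinates. -/
theorem exists_cube {ι : Type*} [Fintype ι] [DecidableEq ι] {U : Submodule ℝ (ι → ℝ)} {k : ℕ}
    (hU : IsUniform U k) (hι : Fintype.card ι = 2 * k + 2) (T Y : Finset ι) (hTY : Disjoint T Y)
    (hcard : T.card + Y.card + 2 = k) (ht : 2 * T.card + 4 ≤ k) :
    ∃ R : Finset ι, Disjoint R T ∧ ∀ P ⊆ T, ∃ u ∈ U, (∀ i, u i ≠ 0) ∧
      (Finset.univ.filter fun i => 0 < u i).card = k + 1 ∧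
      ∀ i, i ∉ Y → (0 < u i ↔ i ∈ R ∪ P) := by
  have hZc : (T ∪ Y).card + 2 = k := by rw [Finset.card_union_of_disjoint hTY]; omega
  obtain ⟨x, hx, v, hv, hv0, hbal⟩ := exists_halving hU (by omega) (T ∪ Y) hZc
  set p := Finset.univ.filter fun i => 0 < v i with hp
  set q := Finset.univ.filter fun i => v i < 0 with hq
  have hsum : ∑ i, (SignType.sign (v i) : ℤ) = p.card - q.card := by
    rw [hp, hq, Finset.card_filter, Finset.card_filter]
    push_cast
    rw [← Finset.sum_sub_distrib]
    refine Finset.sum_congr rfl fun i _ => ?_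
    rcases lt_trichotomy (v i) 0 with h | h | h
    · simp [sign_neg h, h, h.not_gt]
    · simp [h]
    · simp [sign_pos h, h, h.not_gt]
  have hpq : p.card + q.card + (insert x (T ∪ Y)).card = 2 * k + 2 := by
    have e : insert x (T ∪ Y) = Finset.univ.filter fun i => v i = 0 := by
      ext i; rw [← hv0 i]; simp
    rw [e, ← hι, ← Finset.card_univ, Finset.card_eq_sum_ones Finset.univ, hp, hq,
      Finset.card_filter, Finset.card_filter, Finset.card_filter, ← Finset.sum_add_distrib,
      ← Finset.sum_add_distrib]
    refine Finset.sum_congr rfl fun i _ => ?_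
    rcases lt_trichotomy (v i) 0 with h | h | h
    · simp [h, h.not_gt, h.ne]
    · simp [h]
    · simp [h, h.not_gt, h.ne']
  rw [Finset.card_insert_of_notMem hx] at hpq
  rw [hsum, abs_le] at hbal
  have hpT : Disjoint p (insert x (T ∪ Y)) := by
    rw [Finset.disjoint_left]
    intro i hi hi'
    rw [← hv0 i] at hi'
    simp [hp, hi'] at hi
  simp only [Finset.mem_union, not_or] at hx
  rw [Finset.disjoint_insert_right, Finset.disjoint_union_right] at hpT
  obtain ⟨hxp, hpT, hpY⟩ := hpT
  -- The extra zero `x` depends only on `T` and `Y`; it is made positive for every `P`.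
  refine ⟨insert x p, by simp [hx.1, hpT], fun P hP => ?_⟩
  have hPc := Finset.card_le_card hP
  -- `p.card + 1 + P.card + Y'.card = k + 1`; such a `Y'` fits into `Y` since `p.card` differs from
  -- `(k + 3) / 2` by at most `1 / 2`.
  obtain ⟨Y', hY', hY'c⟩ := Finset.exists_subset_card_eq (s := Y) (n := k - p.card - P.card)
    (by omega)
  obtain ⟨u, hu, h⟩ := exists_perturb hU (by omega) (insert x (T ∪ Y))
    (by rw [Finset.card_insert_of_notMem (by simp [hx])]; omega) hv hv0 (insert x (P ∪ Y'))
    (Finset.insert_subset_insert _ (Finset.union_subset_union hP hY'))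
  refine ⟨u, hu, fun i => (h i).1, ?_, fun i hi => ?_⟩
  · have e : (Finset.univ.filter fun i => 0 < u i) = p ∪ insert x (P ∪ Y') := by
      ext i
      simp only [Finset.mem_filter, Finset.mem_univ, true_and, (h i).2, hp, Finset.mem_union]
    rw [e, Finset.card_union_of_disjoint, Finset.card_insert_of_notMem,
      Finset.card_union_of_disjoint (hTY.mono hP hY')]
    · omega
    · simp only [Finset.mem_union, not_or]
      exact ⟨fun h => hx.1 (hP h), fun h => hx.2 (hY' h)⟩
    · rw [Finset.disjoint_insert_right, Finset.disjoint_union_right]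
      exact ⟨hxp, hpT.mono_right hP, hpY.mono_right hY'⟩
  · rw [(h i).2]
    have : i ∉ Y' := fun h => hi (hY' h)
    simp only [hp, Finset.mem_union, Finset.mem_insert, Finset.mem_filter, Finset.mem_univ,
      true_and, this]
    tauto

/-- The sets of cardinality `n` that occur as the set of positive coordinates of a vector of `U`
without zero coordinate. -/
def balancedSets {ι : Type*} [Fintype ι] (U : Submodule ℝ (ι → ℝ)) (n : ℕ) :
    Finset (Finset ι) :=
  open Classical in
  Finset.univ.filter fun B => B.card = n ∧ ∃ u ∈ U, (∀ i, u i ≠ 0) ∧ ∀ i, 0 < u i ↔ i ∈ B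

theorem choose_le_card_balancedSets {ι : Type*} [Fintype ι] {U : Submodule ℝ (ι → ℝ)} {k : ℕ}
    (hU : IsUniform U k) (hι : Fintype.card ι = 2 * k + 2) (t : ℕ) (ht : 2 * t + 4 ≤ k) :
    (k + 4 + t).choose t ≤ (balancedSets U (k + 1)).card := by
  classical
  obtain ⟨Y, -, hY⟩ := Finset.exists_subset_card_eq (s := (Finset.univ : Finset ι))
    (n := k - 2 - t) (by rw [Finset.card_univ]; omega)
  have hX : Fintype.card {i // i ∉ Y} = k + 4 + t := by
    rw [Fintype.card_subtype_compl, Fintype.card_coe]; omega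
  rw [← hX]
  refine le_trans (card_choose_le_of_cubes
    ((balancedSets U (k + 1)).image fun B => B.subtype (· ∉ Y)) t fun T hT => ?_)
    Finset.card_image_le
  obtain ⟨R, hR, h⟩ := exists_cube hU hι (T.map (Function.Embedding.subtype _)) Y
    (by rw [Finset.disjoint_left]; simp +contextual) (by rw [Finset.card_map]; omega)
    (by rw [Finset.card_map]; omega)
  refine ⟨R.subtype (· ∉ Y), ?_, fun P hP => ?_⟩
  · rw [Finset.disjoint_left] at hR ⊢
    intro i hi hiT
    exact hR (Finset.mem_subtype.1 hi) (Finset.mem_map_of_mem _ hiT)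
  · obtain ⟨u, hu, hu0, hc, hRP⟩ := h _ (Finset.map_subset_map.2 hP)
    refine Finset.mem_image.2 ⟨Finset.univ.filter fun i => 0 < u i, ?_, ?_⟩
    · simp only [balancedSets, Finset.mem_filter, Finset.mem_univ, true_and]
      exact ⟨hc, u, hu, hu0, fun i => Iff.rfl⟩
    · ext i
      have := hRP i i.2
      simp only [Finset.mem_subtype, Finset.mem_filter, Finset.mem_univ, true_and, this,
        Finset.mem_union]
      simp [i.2]

/-! ### Affine dependences and crossing pairs -/

/-- The space of affine dependences of the points of `V`: the weights on `V` with sum zero and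
weighted sum of points zero. -/
def affineDependences {d : ℕ} (V : Finset (Pt d)) : Submodule ℝ (V → ℝ) where
  carrier := {u | ∑ i, u i = 0 ∧ ∑ i, u i • (i : Pt d) = 0}
  zero_mem' := by simp
  add_mem' := by
    rintro u v ⟨h1, h2⟩ ⟨h3, h4⟩
    exact ⟨by simp [-Finset.univ_eq_attach, Finset.sum_add_distrib, h1, h3],
      by simp [-Finset.univ_eq_attach, add_smul, Finset.sum_add_distrib, h2, h4]⟩
  smul_mem' := by
    rintro c u ⟨h1, h2⟩
    exact ⟨by simp [-Finset.univ_eq_attach, ← Finset.mul_sum, h1], by simp [-Finset.univ_eq_attach, mul_smul, ← Finset.smul_sum, h2]⟩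

theorem mem_affineDependences {d : ℕ} {V : Finset (Pt d)} {u : V → ℝ} :
    u ∈ affineDependences V ↔ ∑ i, u i = 0 ∧ ∑ i, u i • (i : Pt d) = 0 := Iff.rfl

theorem finrank_affineDependences {d : ℕ} (V : Finset (Pt d)) :
    V.card ≤ Module.finrank ℝ (affineDependences V) + (d + 1) := by
  let L : (V → ℝ) →ₗ[ℝ] ℝ × Pt d :=
    { toFun := fun u => (∑ i, u i, ∑ i, u i • (i : Pt d))
      map_add' := by intro u v; simp [Finset.sum_add_distrib, add_smul]
      map_smul' := by intro c u; simp [Finset.mul_sum, Finset.smul_sum, mul_smul] }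
  have hL : LinearMap.ker L = affineDependences V := by
    ext u
    rw [LinearMap.mem_ker, mem_affineDependences]
    exact Prod.ext_iff
  have h1 := L.finrank_range_add_finrank_ker
  have h2 := (LinearMap.range L).finrank_le
  rw [hL] at h1
  simp only [Module.finrank_fintype_fun_eq_card, Fintype.card_coe, Module.finrank_prod,
    Module.finrank_self, finrank_euclideanSpace, Fintype.card_fin] at h1 h2
  omega

/-- General position makes the affine dependences uniform: a dependence vanishing on `d - 1` of the
`2d` points is supported on `d + 1` affinely independent points, hence zero, and by dimension count
restriction to the `d - 1` coordinates is an isomorphism. -/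
theorem isUniform_affineDependences {d : ℕ} {V : Finset (Pt d)} {k : ℕ} (hd : d = k + 1)
    (hV : V.card = 2 * d) (hgp : GenPos d V) : IsUniform (affineDependences V) k := by
  classical
  intro A hA
  have hun : ∀ u ∈ affineDependences V, (∀ i ∈ A, u i = 0) → u = 0 := by
    rintro u ⟨h1, h2⟩ hu
    have hAc : Aᶜ.card = d + 1 := by rw [Finset.card_compl, Fintype.card_coe]; omega
    have hS := hgp (Aᶜ.map (Function.Embedding.subtype _)) (by intro x; simp +contextual)
      (by rw [Finset.card_map, hAc])
    let e : {i // i ∈ Aᶜ} ↪ {x // x ∈ ((Aᶜ.map (Function.Embedding.subtype _) :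
        Finset (Pt d)) : Set (Pt d))} :=
      ⟨fun i => ⟨i.1.1, Finset.mem_coe.2 (Finset.mem_map_of_mem _ i.2)⟩, fun i j h => by
        have h' := Subtype.ext_iff.1 h
        exact Subtype.ext (Subtype.ext h')⟩
    have hS' := hS.comp_embedding e
    have hz : ∀ i, i ∉ Aᶜ → u i = 0 := fun i hi => hu i (by simpa using hi)
    have h := hS'.eq_zero_of_sum_eq_zero (s := Finset.univ) (w := fun i => u i.1)
      (by rw [Finset.sum_coe_sort Aᶜ u, ← h1]
          exact Finset.sum_subset (Finset.subset_univ _) fun i _ hi => hz i hi)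
      (by refine (Finset.sum_coe_sort Aᶜ (fun i => u i • (i : Pt d))).trans ?_
          rw [← h2]
          exact Finset.sum_subset (Finset.subset_univ _) fun i _ hi => by simp [hz i hi])
    funext i
    by_cases hi : i ∈ Aᶜ
    · exact h ⟨i, hi⟩ (Finset.mem_univ _)
    · exact hz i hi
  refine ⟨hun, fun w => ?_⟩
  let ρ : affineDependences V →ₗ[ℝ] (A → ℝ) :=
    (LinearMap.funLeft ℝ ℝ ((↑) : A → V)).comp (affineDependences V).subtype
  have hρ : Function.Injective ρ := by
    rw [← LinearMap.ker_eq_bot, LinearMap.ker_eq_bot']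
    intro u hu
    exact Subtype.ext (hun u u.2 fun i hi => congrFun hu ⟨i, hi⟩)
  have h1 := LinearMap.finrank_le_finrank_of_injective hρ
  have h2 := finrank_affineDependences V
  have h3 : Module.finrank ℝ (A → ℝ) = k := by simp [hA]
  have hs := (LinearMap.injective_iff_surjective_of_finrank_eq_finrank (f := ρ) (by omega)).1 hρ
  obtain ⟨u, hu⟩ := hs fun i => w i
  exact ⟨u, u.2, fun i hi => congrFun hu ⟨i, hi⟩⟩

/-- An affine dependence with positive set `B` and negative set `Bᶜ` expresses one point as a convex
combination with positive weights both of `B` and of `Bᶜ`. -/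
theorem crossing_of_mem_balancedSets {d : ℕ} {V : Finset (Pt d)} (hd : 0 < d)
    (hV : V.card = 2 * d) (hgp : GenPos d V) {B : Finset V}
    (hB : B ∈ balancedSets (affineDependences V) d) :
    s(B.map (Function.Embedding.subtype _),
      (open Classical in Bᶜ).map (Function.Embedding.subtype _)) ∈ crossingHyperedgePairs d V := by
  classical
  simp only [balancedSets, Finset.mem_filter, Finset.mem_univ, true_and] at hB
  obtain ⟨hBc, u, ⟨h1, h2⟩, hu0, hu⟩ := hB
  have hCc : Bᶜ.card = d := by rw [Finset.card_compl, Fintype.card_coe]; omega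
  have hsub : ∀ D : Finset V, D.map (Function.Embedding.subtype _) ⊆ V := by
    intro D x; simp +contextual
  refine ⟨_, _, rfl, hsub _, hsub _, by rw [Finset.card_map, hBc], ?_, ?_, ?_⟩
  · rw [Finset.card_map]; convert hCc
  · rw [Finset.disjoint_map]; convert disjoint_compl_right (a := B)
  have hs : 0 < ∑ i ∈ B, u i :=
    Finset.sum_pos (fun i hi => (hu i).2 hi) (Finset.card_pos.1 (by omega))
  set s := ∑ i ∈ B, u i with hs_def
  have key : ∀ (D : Finset V) (w : V → ℝ), D.card = d → (∀ i ∈ D, 0 < w i) → ∑ i ∈ D, w i = 1 →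
      ∑ i ∈ D, w i • (i : Pt d) ∈ intrinsicInterior ℝ (convexHull ℝ
        ((D.map (Function.Embedding.subtype _) : Finset (Pt d)) : Set (Pt d))) := by
    intro D w hDc hw hw1
    have := mem_intrinsicInterior_convexHull
      (hgp (D.map (Function.Embedding.subtype _)) (hsub _) (by rw [Finset.card_map]; omega))
      (fun x => if h : x ∈ V then w ⟨x, h⟩ else 0)
      (by simp only [Finset.mem_map]
          rintro _ ⟨i, hi, rfl⟩
          simpa using hw i hi)
      (by rw [Finset.sum_map, ← hw1]; simp)
    rw [Finset.sum_map] at this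
    have e : ∑ i ∈ D, w i • (i : Pt d) = ∑ i ∈ D, (if h : (i : Pt d) ∈ V then w ⟨i, h⟩ else 0) •
        (i : Pt d) := Finset.sum_congr rfl fun i _ => by rw [dif_pos i.2]
    rw [e]
    exact this
  have hs1 : ∑ i ∈ Bᶜ, u i = - s := by
    have := Finset.sum_add_sum_compl B u
    linarith
  have hs2 : ∑ i ∈ Bᶜ, u i • (i : Pt d) = - ∑ i ∈ B, u i • (i : Pt d) := by
    rw [eq_neg_iff_add_eq_zero, add_comm, Finset.sum_add_sum_compl, h2]
  refine ⟨∑ i ∈ B, (u i / s) • (i : Pt d), key B (fun i => u i / s) hBc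
    (fun i hi => div_pos ((hu i).2 hi) hs) (by rw [← Finset.sum_div, div_self hs.ne']), ?_⟩
  have h := key Bᶜ (fun i => - u i / s) hCc (fun i hi => ?_) ?_
  · convert h using 1
    simp only [div_eq_inv_mul, mul_smul, ← Finset.smul_sum, neg_smul, Finset.sum_neg_distrib,
      mul_neg, hs2, smul_neg, neg_neg]
  · refine div_pos (neg_pos.2 (lt_of_le_of_ne (not_lt.1 fun h => ?_) (hu0 i))) hs
    exact Finset.mem_compl.1 hi ((hu i).1 h)
  · rw [← Finset.sum_div, Finset.sum_neg_distrib, hs1, neg_neg, div_self hs.ne']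

theorem finite_crossingHyperedgePairs {d : ℕ} (V : Finset (Pt d)) :
    (crossingHyperedgePairs d V).Finite := by
  refine ((V.powerset ×ˢ V.powerset).finite_toSet.image fun p => s(p.1, p.2)).subset ?_
  rintro _ ⟨B, C, rfl, hB, hC, -⟩
  exact ⟨(B, C), by simp [hB, hC], rfl⟩

/-- The pair `{B, Bᶜ}` arises only from `B` and `Bᶜ`, so passing to unordered pairs loses at most a
factor of two. -/
theorem card_balancedSets_le {d : ℕ} {V : Finset (Pt d)} (hd : 0 < d)
    (hV : V.card = 2 * d) (hgp : GenPos d V) :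
    (balancedSets (affineDependences V) d).card ≤ 2 * (crossingHyperedgePairs d V).ncard := by
  classical
  rw [Set.ncard_eq_toFinset_card _ (finite_crossingHyperedgePairs V)]
  refine Finset.card_le_mul_card_image_of_maps_to
    (f := fun B : Finset V => s(B.map (Function.Embedding.subtype _),
      Bᶜ.map (Function.Embedding.subtype _)))
    (fun B hB => (Set.Finite.mem_toFinset _).2 ?_) 2 fun p _ => ?_
  · convert crossing_of_mem_balancedSets hd hV hgp hB
  · induction p with
    | _ C D =>
    refine le_trans (Finset.card_le_card_of_injOn (t := {C, D})
      (fun B : Finset V => B.map (Function.Embedding.subtype _)) ?_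
      ((Finset.map_injective _).injOn)) Finset.card_le_two
    intro B hB
    have h := (Finset.mem_filter.1 hB).2
    rw [Sym2.eq_iff] at h
    rcases h with h | h <;> simp [h.1]

/-- The `d`-dimensional rectilinear crossing number of `K_{2d}^d` is `Ω(2^d √d)`. -/
theorem crossing_number_K2dd_lower_bound :
    ∃ (c : ℝ) (d₀ : ℕ), 0 < c ∧
      ∀ d : ℕ, d₀ ≤ d → ∀ V : Finset (Pt d), V.card = 2 * d → GenPos d V →
        c * 2 ^ d * Real.sqrt d ≤ ((crossingHyperedgePairs d V).ncard : ℝ) := by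
  -- With `m = (k + 1) / 2 = s + 3`, there are at least `5 ^ (m - 3) / 2` crossing pairs, while
  -- `2 ^ d * √d ≤ 128 * 4 ^ s * (s + 4)`, and Bernoulli compares `4 ^ s * (s + 4)` with `5 ^ s`.
  refine ⟨1 / 2000, 6, by norm_num, fun d hd V hV hgp => ?_⟩
  obtain ⟨k, rfl⟩ : ∃ k, d = k + 1 := ⟨d - 1, by omega⟩
  obtain ⟨s, hs⟩ : ∃ s, (k + 1) / 2 = s + 3 := ⟨(k + 1) / 2 - 3, by omega⟩
  have h1 := choose_le_card_balancedSets (isUniform_affineDependences rfl hV hgp)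
    (by rw [Fintype.card_coe, hV]; ring) s (by omega)
  have h2 := card_balancedSets_le (by omega) hV hgp
  have h3 : (3 * s + 9).choose s ≤ (k + 4 + s).choose s := Nat.choose_le_choose s (by omega)
  have h4 : (5 : ℝ) ^ s ≤ 2 * ((crossingHyperedgePairs (k + 1) V).ncard : ℝ) := by
    exact_mod_cast (five_pow_le_choose s).trans (h3.trans (h1.trans h2))
  have hk : k + 1 ≤ 2 * s + 7 := by omega
  have h5 : (2 : ℝ) ^ (k + 1) ≤ 128 * 4 ^ s := by
    calc (2 : ℝ) ^ (k + 1) ≤ 2 ^ (2 * s + 7) := pow_le_pow_right₀ (by norm_num) hk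
      _ = 128 * 4 ^ s := by rw [pow_add, pow_mul]; norm_num; ring
  have h6 : Real.sqrt ((k + 1 : ℕ) : ℝ) ≤ s + 4 := by
    rw [Real.sqrt_le_left (by positivity)]
    have : ((k + 1 : ℕ) : ℝ) ≤ 2 * s + 7 := by exact_mod_cast hk
    nlinarith [sq_nonneg (s : ℝ)]
  have h7 : 1 + (s : ℝ) * (1 / 4) ≤ (1 + 1 / 4) ^ s :=
    one_add_mul_le_pow (by norm_num) s
  have h8 : (5 : ℝ) ^ s = 4 ^ s * (1 + 1 / 4) ^ s := by rw [← mul_pow]; norm_num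
  have h9 : (0 : ℝ) < 4 ^ s := by positivity
  have h10 : (4 : ℝ) ^ s * (1 + s * (1 / 4)) ≤ 5 ^ s := by
    rw [h8]; exact mul_le_mul_of_nonneg_left h7 h9.le
  have h11 : (2 : ℝ) ^ (k + 1) * Real.sqrt ((k + 1 : ℕ) : ℝ) ≤ 128 * 4 ^ s * (s + 4) :=
    mul_le_mul h5 h6 (Real.sqrt_nonneg _) (by positivity)
  nlinarith
end
end

section
/- There exist a constant c > 0 and a natural number d₀ such that for every integer d ≥ d₀ and every integer n ≥ 2d the following holds: for every set V of n points in general position in ℝ^d, the number of unordered pairs {B, C} of disjoint d-element subsets of V such that the relative interiors of the convex hulls of B and of C have a common point is at least c · 2^d · √d · C(n, 2d), where C(n, 2d) is the binomial coefficient. (This is the lower bound cr_d(K_n^d) = Ω(2^d √d) · C(n, 2d).) -/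
noncomputable section

/-!
The bound is proved with `c = 2⁻¹¹` and `d₀ = 20`, by finding `2 ^ (d - 11) * √d` crossing pairs
inside every `2d`-subset `T` of `V` (`crossings_of_two_mul`). A crossing pair `{B, C}` determines
`T = B ∪ C`, so summing over the `C(n, 2d)` choices of `T` gives the theorem.

Let `L` be the space of affine dependences of `T`: functions `w` on `T` with `∑ w t = 0` and
`∑ w t • t = 0`. By general position a dependence vanishing at `d - 1` points is zero, and `L` has
dimension `d - 1`, so its values at any `d - 1` points can be prescribed, in exactly one way. A
dependence that is positive on a `d`-subset `B` and negative on `T \ B` yields a crossing pair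
(`crossingPair_of_dependence`): its normalized positive and negative parts represent one point
lying in both relative interiors. It remains to count the sign patterns of `L` with `d` positive
and `d` negative entries.

Fix `R ⊆ T` of size `d - 4`, two further points `p`, `q`, and let `S` be the remaining `d + 2`
points. The dependences vanishing on `R` form a three-dimensional space; normalizing `w p = 1` turns
it into a plane carrying the line arrangement `{w l = 0}`, `l ∈ S`, in general position, with the
linear functional `w q`.

* On each line `i ∈ S` a median argument (`median`, `vertex`) finds a vertex `v`, the crossing of the
  lines `i` and `j`, at which the numbers of positive and negative entries on `S` differ by at most
  one.
* Exactly one of the four cells of the arrangement around `v` has `v` as its `w q`-lowest point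
  (`cell`). A cell has at most one lowest vertex, which lies on only two lines, so at least
  `(d + 2) / 2` cells arise, and all of them are almost balanced (`many_cells`).
* A cell with positive side `P` lives on `T \ R`. The signs on `R` can be prescribed arbitrarily by
  a small perturbation, so the cell extends to `C(d - 4, d - |P|)` sign patterns with `d` positive
  entries, and this binomial coefficient is at least `2 ^ (d - 10) / √d` (`near_central_choose`).

Altogether this gives `2 ^ (d - 11) * √d` positive sides `B` (`count`). All of them contain `p`, so
the unordered pairs `{B, T \ B}` are distinct.
-/

open Finset

/-! ### Binomial coefficients near the middle -/

theorem four_pow_le_centralBinom_sq (n : ℕ) (hn : 1 ≤ n) :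
    16 ^ n ≤ 4 * n * n.centralBinom ^ 2 := by
  induction n, hn using Nat.le_induction with
  | base => simp [Nat.centralBinom, Nat.choose]
  | succ n hn ih =>
    have h := Nat.succ_mul_centralBinom_succ n
    have : (n+1) * 16 ^ (n+1) ≤ (n+1) * (4 * (n+1) * (n+1).centralBinom ^ 2) := by
      calc (n+1) * 16 ^ (n+1) = 16 * (n+1) * 16 ^ n := by ring
        _ ≤ 16 * (n+1) * (4 * n * n.centralBinom ^ 2) := by gcongr
        _ = 4 * (4 * n * (n+1)) * (4 * n.centralBinom^2) := by ring
        _ ≤ 4 * ((2*n+1)^2) * (4 * n.centralBinom^2) := by gcongr; nlinarith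
        _ = 4 * (2 * (2*n+1) * n.centralBinom)^2 := by ring
        _ = 4 * ((n+1) * (n+1).centralBinom)^2 := by rw [h]
        _ = _ := by ring
    exact Nat.le_of_mul_le_mul_left this (Nat.succ_pos n)

/-- A binomial coefficient of `d - 4 = a + b` with `|a - b| ≤ 5` is at least
`2 ^ (d - 10) / √d`, by comparison with the central binomial coefficient at `min a b`. -/
theorem near_central_choose (a b d : ℕ) (h1 : a ≤ b + 5) (h2 : b ≤ a + 5)
    (hd : a + b + 4 = d) (hd' : 20 ≤ d) :
    (2:ℝ) ^ d ≤ 2 ^ 10 * √d * ((d - 4).choose a : ℝ) := by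
  obtain ⟨n, hna, hnb, hn⟩ : ∃ n, n ≤ a ∧ n ≤ b ∧ a + b ≤ 2 * n + 5 :=
    ⟨min a b, min_le_left _ _, min_le_right _ _, by omega⟩
  have hc : n.centralBinom ≤ (d - 4).choose a := by
    rw [show d - 4 = a + b by omega, Nat.centralBinom]
    calc (2 * n).choose n ≤ (a + n).choose n := Nat.choose_le_choose _ (by omega)
      _ = (a + n).choose a := by rw [Nat.choose_symm_add]
      _ ≤ _ := Nat.choose_le_choose _ (by omega)
  have h16 : (16:ℝ) ^ n ≤ 4 * n * (n.centralBinom : ℝ) ^ 2 := by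
    exact_mod_cast four_pow_le_centralBinom_sq n (by omega)
  have h4 : (2:ℝ) ^ (2 * n) ≤ 2 * √d * n.centralBinom := by
    refine (pow_le_pow_iff_left₀ (by positivity) (by positivity) two_ne_zero).1 ?_
    rw [mul_pow, mul_pow, Real.sq_sqrt (by positivity), ← pow_mul]
    calc (2:ℝ) ^ (2 * n * 2) = 16 ^ n := by rw [show 2 * n * 2 = 4 * n by ring, pow_mul]; norm_num
      _ ≤ _ := h16
      _ ≤ _ := by
        have : (n:ℝ) ≤ d := by exact_mod_cast (by omega : n ≤ d)
        norm_num; gcongr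
  calc (2:ℝ) ^ d ≤ 2 ^ (2 * n + 9) := pow_le_pow_right₀ (by norm_num) (by omega)
    _ = 2 ^ 9 * 2 ^ (2 * n) := by ring
    _ ≤ 2 ^ 9 * (2 * √d * n.centralBinom) := by gcongr
    _ = 2 ^ 10 * √d * n.centralBinom := by ring
    _ ≤ _ := by gcongr

/-! ### Relative interiors of simplices -/

/-- A convex combination with positive weights of affinely independent points lies in the relative
interior of their convex hull: the barycentric coordinates are continuous, and positivity of all of
them cuts out a relatively open subset of the hull. -/
theorem sum_smul_mem_intrinsicInterior (d : ℕ) (B : Finset (Pt d))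
    (hB : AffineIndependent ℝ ((↑) : {x // x ∈ (B : Set (Pt d))} → Pt d))
    (w : Pt d → ℝ) (hw : ∀ b ∈ B, 0 < w b) (h1 : ∑ b ∈ B, w b = 1) :
    ∑ b ∈ B, w b • b ∈ intrinsicInterior ℝ (convexHull ℝ (B : Set (Pt d))) := by
  -- barycentric coordinates with respect to `B`, extended continuously to the whole space
  obtain ⟨φ, hφ, key⟩ : ∃ φ : {x // x ∈ B} → Pt d → ℝ, (∀ b, Continuous (φ b)) ∧
      ∀ v : Pt d → ℝ, ∑ b ∈ B, v b = 1 → ∀ b, φ b (∑ b ∈ B, v b • b) = v b := by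
    obtain ⟨T, hBT, hT, hspan⟩ := exists_subset_affineIndependent_affineSpan_eq_top hB
    let β : AffineBasis T ℝ (Pt d) :=
      ⟨((↑) : T → Pt d), hT, by rw [Subtype.range_coe]; exact hspan⟩
    refine ⟨fun b => β.coord ⟨b, hBT b.2⟩, fun b => continuous_barycentric_coord _ _, ?_⟩
    intro v hv b
    let emb : {x // x ∈ B} ↪ T := ⟨fun x => (⟨x.1, hBT x.2⟩ : T), fun x y h => by
        ext1; simpa using h⟩
    have e : ∑ b ∈ B, v b • b = (B.attach.map emb).affineCombination ℝ β (fun t => v t.1) := by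
      rw [Finset.affineCombination_eq_linear_combination]
      · rw [Finset.sum_map]
        exact (Finset.sum_attach B (fun b => v b • b)).symm
      · rw [Finset.sum_map]
        exact (Finset.sum_attach B v).trans hv
    change β.coord ⟨b.1, hBT b.2⟩ _ = _
    rw [e, β.coord_apply_combination_of_mem]
    · exact Finset.mem_map.2 ⟨b, Finset.mem_attach _ _, rfl⟩
    · rw [Finset.sum_map]
      exact (Finset.sum_attach B v).trans hv
  have hmem : ∀ v : Pt d → ℝ, (∀ b ∈ B, 0 < v b) → ∑ b ∈ B, v b = 1 →
      ∑ b ∈ B, v b • b ∈ convexHull ℝ (B : Set (Pt d)) := by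
    intro v hv hv1
    exact Finset.mem_convexHull'.2 ⟨v, fun b hb => (hv b hb).le, hv1, rfl⟩
  rw [mem_intrinsicInterior]
  refine ⟨⟨_, subset_affineSpan _ _ (hmem w hw h1)⟩, ?_, rfl⟩
  rw [mem_interior]
  refine ⟨⋂ b, {x | 0 < φ b x.1}, ?_, ?_, ?_⟩
  · rintro ⟨x, hx⟩ hpos
    rw [affineSpan_convexHull] at hx
    have hx' : x ∈ affineSpan ℝ (Set.range ((↑) : {x // x ∈ B} → Pt d)) := by
      simpa using hx
    obtain ⟨v, hv1, rfl⟩ := eq_affineCombination_of_mem_affineSpan_of_fintype hx'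
    obtain ⟨v', hv'⟩ : ∃ v' : Pt d → ℝ, ∀ b : {x // x ∈ B}, v' b = v b :=
      ⟨fun b => if h : b ∈ B then v ⟨b, h⟩ else 0, fun b => by simp⟩
    have hv1' : ∑ b ∈ B, v' b = 1 := by
      rw [← hv1, ← Finset.sum_coe_sort]; simp [hv']
    have e : (univ.affineCombination ℝ ((↑) : {x // x ∈ B} → Pt d)) v = ∑ b ∈ B, v' b • b := by
      rw [Finset.affineCombination_eq_linear_combination _ _ _ hv1,
        ← Finset.sum_coe_sort B (fun b => v' b • b)]
      simp [hv']
    simp only [Set.mem_iInter, Set.mem_ofPred_eq, e, key v' hv1'] at hpos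
    simp only [Set.mem_preimage, e]
    exact hmem v' (fun b hb => hpos ⟨b, hb⟩) hv1'
  · exact isOpen_iInter_of_finite fun b =>
      isOpen_lt continuous_const ((hφ b).comp continuous_subtype_val)
  · simp only [Set.mem_iInter, Set.mem_ofPred_eq, key w h1]
    exact fun b => hw b b.2

/-! ### Signs and a weighted median -/

/-- The sign of a real number as an integer, so that signs can be summed. -/
def sgn (x : ℝ) : ℤ := SignType.sign x

theorem sgn_pos {x : ℝ} (h : 0 < x) : sgn x = 1 := by simp [sgn, h]
theorem sgn_neg {x : ℝ} (h : x < 0) : sgn x = -1 := by simp [sgn, h]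
theorem sgn_zero : sgn 0 = 0 := by simp [sgn]
theorem sgn_mul (x y : ℝ) : sgn (x * y) = sgn x * sgn y := by simp [sgn, sign_mul]
theorem abs_sgn_le (x : ℝ) : |sgn x| ≤ 1 := by
  rcases lt_trichotomy x 0 with h | rfl | h <;> simp [sgn_pos, sgn_neg, sgn_zero, *]

theorem sgn_eq_one_iff {x : ℝ} : sgn x = 1 ↔ 0 < x := by
  rcases lt_trichotomy x 0 with h | rfl | h
  · simp [sgn_neg h, h.le]
  · simp [sgn_zero]
  · simp [sgn_pos h, h]

theorem sgn_eq_neg_one_iff {x : ℝ} : sgn x = -1 ↔ x < 0 := by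
  rcases lt_trichotomy x 0 with h | rfl | h
  · simp [sgn_neg h, h]
  · simp [sgn_zero]
  · simp [sgn_pos h, h.le]

/-- The case of `median` with nonnegative total. Moving `k` through `s` in increasing order of `t`,
the sum starts at `ε k - ∑ ε ≤ 1`, ends at `∑ ε - ε k ≥ -1`, and changes from `k` to the next
element `m` by `ε k + ε m ≤ 2`. The largest `k` with sum at most `1` therefore works. -/
theorem median_aux {α : Type*} [DecidableEq α] (s : Finset α) (hs : s.Nonempty) (t : α → ℝ)
    (ht : Set.InjOn t s) (ε : α → ℤ) (hε : ∀ l ∈ s, ε l = 1 ∨ ε l = -1)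
    (h0 : 0 ≤ ∑ l ∈ s, ε l) :
    ∃ k ∈ s, |∑ l ∈ s, ε l * sgn (t k - t l)| ≤ 1 := by
  set F : α → ℤ := fun k => ∑ l ∈ s, ε l * sgn (t k - t l) with hF
  have hlt : ∀ k ∈ s, ∀ l ∈ s, t k ≤ t l → l ≠ k → t k < t l := fun k hk l hl h hne =>
    lt_of_le_of_ne h fun h => hne (ht hl hk h.symm)
  have hA : (s.filter fun k => F k ≤ 1).Nonempty := by
    obtain ⟨k, hk, hmin⟩ := s.exists_min_image t hs
    refine ⟨k, Finset.mem_filter.2 ⟨hk, ?_⟩⟩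
    have : F k = -∑ l ∈ s, ε l + ∑ l ∈ s, if l = k then ε l else 0 := by
      rw [← Finset.sum_neg_distrib, ← Finset.sum_add_distrib]
      refine Finset.sum_congr rfl fun l hl => ?_
      split_ifs with h
      · subst h; simp [sgn_zero]
      · rw [sgn_neg (by linarith [hlt k hk l hl (hmin l hl) h])]; ring
    rw [Finset.sum_ite_eq' s k ε, if_pos hk] at this
    rcases hε k hk with h | h <;> omega
  obtain ⟨k, hkA, hmax⟩ := Finset.exists_max_image _ t hA
  obtain ⟨hk, hk1⟩ := Finset.mem_filter.1 hkA
  refine ⟨k, hk, abs_le.2 ⟨?_, hk1⟩⟩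
  change -1 ≤ F k
  rcases (s.filter fun l => t k < t l).eq_empty_or_nonempty with he | hne
  · have : F k = ∑ l ∈ s, ε l - ∑ l ∈ s, if l = k then ε l else 0 := by
      rw [← Finset.sum_sub_distrib]
      refine Finset.sum_congr rfl fun l hl => ?_
      split_ifs with h
      · subst h; simp [sgn_zero]
      · have h1 : ¬ t k < t l := fun h1 => by
          have : l ∈ s.filter fun l => t k < t l := Finset.mem_filter.2 ⟨hl, h1⟩
          rw [he] at this; simp at this
        rw [sgn_pos (by linarith [hlt l hl k hk (not_lt.1 h1) (Ne.symm h)])]; ring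
    rw [Finset.sum_ite_eq' s k ε, if_pos hk] at this
    rcases hε k hk with h | h <;> omega
  · obtain ⟨m, hm, hmin⟩ := Finset.exists_min_image _ t hne
    obtain ⟨hms, hkm⟩ := Finset.mem_filter.1 hm
    have hFm : 1 < F m := by
      by_contra h
      have := hmax m (Finset.mem_filter.2 ⟨hms, not_lt.1 h⟩)
      linarith
    have hmk : m ≠ k := by rintro rfl; exact lt_irrefl _ hkm
    have : F m = F k + ((∑ l ∈ s, if l = k then ε l else 0) +
        ∑ l ∈ s, if l = m then ε l else 0) := by
      simp only [hF]
      rw [← Finset.sum_add_distrib, ← Finset.sum_add_distrib]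
      refine Finset.sum_congr rfl fun l hl => ?_
      by_cases h1 : l = k
      · subst h1
        rw [if_pos rfl, if_neg hmk.symm, sgn_pos (by linarith)]; simp [sgn_zero]
      by_cases h2 : l = m
      · subst h2
        rw [if_pos rfl, if_neg hmk, sgn_neg (x := t k - t l) (by linarith)]; simp [sgn_zero]
      rw [if_neg h1, if_neg h2]
      rcases lt_or_ge (t k) (t l) with h | h
      · have := hlt m hms l hl (hmin l (Finset.mem_filter.2 ⟨hl, h⟩)) h2
        rw [sgn_neg (by linarith), sgn_neg (by linarith)]; ring
      · have := hlt l hl k hk h (Ne.symm h1)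
        rw [sgn_pos (by linarith), sgn_pos (by linarith)]; ring
    rw [Finset.sum_ite_eq' s k ε, if_pos hk, Finset.sum_ite_eq' s m ε, if_pos hms] at this
    rcases hε k hk with h | h <;> rcases hε m hms with h' | h' <;> omega

/-- For distinct reals `t l` with weights `ε l = ±1`, some `t k` splits the weights into two halves
whose totals differ by at most one. -/
theorem median {α : Type*} [DecidableEq α] (s : Finset α) (hs : s.Nonempty) (t : α → ℝ)
    (ht : Set.InjOn t s) (ε : α → ℤ) (hε : ∀ l ∈ s, ε l = 1 ∨ ε l = -1) :
    ∃ k ∈ s, |∑ l ∈ s, ε l * sgn (t k - t l)| ≤ 1 := by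
  rcases le_total 0 (∑ l ∈ s, ε l) with h | h
  · exact median_aux s hs t ht ε hε h
  · obtain ⟨k, hk, h'⟩ := median_aux s hs t ht (fun l => - ε l)
      (fun l hl => by rcases hε l hl with h | h <;> simp [h]) (by simpa using h)
    refine ⟨k, hk, ?_⟩
    simpa [Finset.sum_neg_distrib, abs_neg] using h'

/-- A small positive multiple of `z` added to `v` changes no nonzero sign of `v`. -/
theorem perturb {ι : Type*} [Fintype ι] (v z : ι → ℝ) :
    ∃ ε : ℝ, 0 < ε ∧ ∀ l, v l ≠ 0 → sgn (v l + ε * z l) = sgn (v l) := by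
  have : ∀ᶠ ε : ℝ in nhdsWithin 0 (Set.Ioi 0),
      0 < ε ∧ ∀ l, v l ≠ 0 → sgn (v l + ε * z l) = sgn (v l) := by
    refine Filter.Eventually.and self_mem_nhdsWithin (Filter.eventually_all.2 fun l => ?_)
    have hc : Filter.Tendsto (fun ε : ℝ => v l + ε * z l) (nhdsWithin 0 (Set.Ioi 0))
        (nhds (v l)) := by
      have : Continuous fun ε : ℝ => v l + ε * z l := by fun_prop
      have := this.tendsto 0
      simp only [zero_mul, add_zero] at this
      exact this.mono_left nhdsWithin_le_nhds
    rcases lt_trichotomy (v l) 0 with h | h | h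
    · filter_upwards [hc.eventually (gt_mem_nhds h)] with ε he _
      rw [sgn_neg h, sgn_neg he]
    · exact Filter.Eventually.of_forall fun _ h' => absurd h h'
    · filter_upwards [hc.eventually (lt_mem_nhds h)] with ε he _
      rw [sgn_pos h, sgn_pos he]
  exact this.exists

/-! ### A line arrangement and its cells

In this part `h3` and `i3` say that an element of `L` vanishing on `R` has arbitrary and uniquely
determining values at any three points outside `R`. -/

/-- An almost balanced vertex on the line `i`. The line consists of the points `u + t • w`, and it
meets the line `k` at the parameter `- u k / w k`; the median of these parameters, weighted by the
signs of `w`, gives the vertex. -/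
theorem vertex {ι : Type*} [DecidableEq ι] (L : Submodule ℝ (ι → ℝ)) (R S : Finset ι) (p q : ι)
    (hp : p ∉ R) (hq : q ∉ R) (hpq : p ≠ q) (hS : ∀ l, l ∈ S ↔ l ∉ R ∧ l ≠ p ∧ l ≠ q)
    (hS2 : 2 ≤ S.card)
    (h3 : ∀ a b c, a ∉ R → b ∉ R → c ∉ R → a ≠ b → a ≠ c → b ≠ c → ∀ x y z : ℝ,
      ∃ w ∈ L, (∀ r ∈ R, w r = 0) ∧ w a = x ∧ w b = y ∧ w c = z)
    (i3 : ∀ a b c, a ∉ R → b ∉ R → c ∉ R → a ≠ b → a ≠ c → b ≠ c →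
      ∀ w ∈ L, (∀ r ∈ R, w r = 0) → w a = 0 → w b = 0 → w c = 0 → w = 0)
    (i : ι) (hi : i ∈ S) :
    ∃ j ∈ S, j ≠ i ∧ ∃ v ∈ L, (∀ r ∈ R, v r = 0) ∧ v p = 1 ∧ v i = 0 ∧ v j = 0 ∧
      |∑ l ∈ S, sgn (v l)| ≤ 1 := by
  obtain ⟨hiR, hip, hiq⟩ := (hS i).1 hi
  obtain ⟨u, huL, huR, hui, hup, huq⟩ := h3 i p q hiR hp hq hip hiq hpq 0 1 0
  obtain ⟨w, hwL, hwR, hwi, hwp, hwq⟩ := h3 i p q hiR hp hq hip hiq hpq 0 0 1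
  have hw0 : ∀ l ∈ S.erase i, w l ≠ 0 := by
    intro l hl h
    obtain ⟨hli, hlS⟩ := Finset.mem_erase.1 hl
    obtain ⟨hlR, hlp, hlq⟩ := (hS l).1 hlS
    have := i3 i p l hiR hp hlR hip hli.symm hlp.symm w hwL hwR hwi hwp h
    rw [this] at hwq; simp at hwq
  set t : ι → ℝ := fun l => - u l / w l with ht
  -- the point `u + t k • w` of the pencil lies on the hyperplane `x k = 0`
  have hsum : ∀ k, ∀ l ∈ S.erase i, u l + t k * w l = w l * (t k - t l) := by
    intro k l hl
    have := hw0 l hl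
    have h1 : t l * w l = - u l := by simp only [ht]; field_simp
    linear_combination h1
  have hmem : ∀ k, u + t k • w ∈ L := fun k => L.add_mem huL (L.smul_mem _ hwL)
  have hinj : Set.InjOn t (S.erase i) := by
    intro k hk l hl hkl
    by_contra hne
    have hk' := Finset.mem_coe.1 hk
    have hl' := Finset.mem_coe.1 hl
    obtain ⟨hki, hkS⟩ := Finset.mem_erase.1 hk'
    obtain ⟨hli, hlS⟩ := Finset.mem_erase.1 hl'
    have := i3 i k l hiR ((hS k).1 hkS).1 ((hS l).1 hlS).1 hki.symm hli.symm hne _ (hmem k)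
      (fun r hr => by simp [huR r hr, hwR r hr]) (by simp [hui, hwi])
      (by simp [hsum k k hk']) (by simpa [hkl] using hsum k l hl')
    have := congrFun this p
    simp [hup, hwp] at this
  obtain ⟨k, hk, hk1⟩ := median (S.erase i)
    (Finset.card_pos.1 (by rw [Finset.card_erase_of_mem hi]; omega)) t hinj
    (fun l => sgn (w l)) (fun l hl => by
      rcases lt_or_gt_of_ne (hw0 l hl) with h | h
      · exact Or.inr (sgn_neg h)
      · exact Or.inl (sgn_pos h))
  obtain ⟨hki, hkS⟩ := Finset.mem_erase.1 hk
  refine ⟨k, hkS, hki, u + t k • w, hmem k, fun r hr => by simp [huR r hr, hwR r hr],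
    by simp [hup, hwp], by simp [hui, hwi], by simp [hsum k k hk], ?_⟩
  rw [← Finset.add_sum_erase S _ hi]
  have e : ∑ l ∈ S.erase i, sgn ((u + t k • w) l) =
      ∑ l ∈ S.erase i, sgn (w l) * sgn (t k - t l) :=
    Finset.sum_congr rfl fun l hl => by simp [hsum k l hl, sgn_mul]
  rw [e]
  simpa [hui, hwi, sgn_zero] using hk1

/-- The cell adjacent to the vertex `v` of the lines `i` and `j` on which the functional `x q` is
minimized at `v`. The identity `x q = v q * x p + a * x i + b * x j` holds on the whole
three-dimensional space, and the cell is the one where `a * x i` and `b * x j` are positive. -/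
theorem cell {ι : Type*} [Fintype ι] (L : Submodule ℝ (ι → ℝ)) (R : Finset ι)
    (p q : ι) (hp : p ∉ R) (hq : q ∉ R) (hpq : p ≠ q)
    (h3 : ∀ a b c, a ∉ R → b ∉ R → c ∉ R → a ≠ b → a ≠ c → b ≠ c → ∀ x y z : ℝ,
      ∃ w ∈ L, (∀ r ∈ R, w r = 0) ∧ w a = x ∧ w b = y ∧ w c = z)
    (i3 : ∀ a b c, a ∉ R → b ∉ R → c ∉ R → a ≠ b → a ≠ c → b ≠ c →
      ∀ w ∈ L, (∀ r ∈ R, w r = 0) → w a = 0 → w b = 0 → w c = 0 → w = 0)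
    (i j : ι) (hi : i ∉ R ∧ i ≠ p ∧ i ≠ q) (hj : j ∉ R ∧ j ≠ p ∧ j ≠ q) (hij : j ≠ i)
    (v : ι → ℝ) (hvL : v ∈ L) (hvR : ∀ r ∈ R, v r = 0) (hvp : v p = 1) (hvi : v i = 0)
    (hvj : v j = 0) :
    ∃ y ∈ L, (∀ r ∈ R, y r = 0) ∧ (∀ l, v l ≠ 0 → sgn (y l) = sgn (v l)) ∧ ∃ a b : ℝ,
      (∀ x ∈ L, (∀ r ∈ R, x r = 0) → x q = v q * x p + a * x i + b * x j) ∧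
      0 < a * y i ∧ 0 < b * y j := by
  obtain ⟨hiR, hip, hiq⟩ := hi
  obtain ⟨hjR, hjp, hjq⟩ := hj
  obtain ⟨e, heL, heR, hep, hei, hej⟩ := h3 p i j hp hiR hjR hip.symm hjp.symm hij.symm 0 1 0
  obtain ⟨f, hfL, hfR, hfp, hfi, hfj⟩ := h3 p i j hp hiR hjR hip.symm hjp.symm hij.symm 0 0 1
  have ha : e q ≠ 0 := fun h => by
    have := i3 p j q hp hjR hq hjp.symm hpq hjq e heL heR hep hej h
    rw [this] at hei; simp at hei
  have hb : f q ≠ 0 := fun h => by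
    have := i3 p i q hp hiR hq hip.symm hpq hiq f hfL hfR hfp hfi h
    rw [this] at hfj; simp at hfj
  -- the coefficients are `a = e q` and `b = f q`, so this direction increases both terms
  obtain ⟨z, hzL, hzR, hzp, hzi, hzj⟩ :=
    h3 p i j hp hiR hjR hip.symm hjp.symm hij.symm 0 (e q) (f q)
  obtain ⟨ε, hε, hεs⟩ := perturb v z
  refine ⟨v + ε • z, L.add_mem hvL (L.smul_mem _ hzL), fun r hr => by simp [hvR r hr, hzR r hr],
    fun l hl => by simpa using hεs l hl, e q, f q, ?_, ?_, ?_⟩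
  · intro x hxL hxR
    have := i3 p i j hp hiR hjR hip.symm hjp.symm hij.symm (x - (x p • v + x i • e + x j • f))
      (L.sub_mem hxL (L.add_mem (L.add_mem (L.smul_mem _ hvL) (L.smul_mem _ heL))
        (L.smul_mem _ hfL))) (fun r hr => by simp [hxR r hr, hvR r hr, heR r hr, hfR r hr])
      (by simp [hvp, hep, hfp]) (by simp [hvi, hei, hfi]) (by simp [hvj, hej, hfj])
    have := congrFun this q
    simp at this
    linear_combination this
  · simp only [Pi.add_apply, Pi.smul_apply, smul_eq_mul, hvi, hzi, zero_add]
    have : 0 < e q * e q := mul_self_pos.2 ha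
    nlinarith [mul_pos hε this]
  · simp only [Pi.add_apply, Pi.smul_apply, smul_eq_mul, hvj, hzj, zero_add]
    have : 0 < f q * f q := mul_self_pos.2 hb
    nlinarith [mul_pos hε this]

/-- If `x` is zero or has the sign of `y`, the inequality `0 < a * y` passes to `x` in weak form.
This expresses that a vertex lies in the closure of a cell. -/
theorem sgn_weak {a y x : ℝ} (h : 0 < a * y) (hx : x ≠ 0 → (0 < x ↔ 0 < y)) :
    0 ≤ a * x ∧ (a * x = 0 → x = 0) := by
  have ha : a ≠ 0 := by rintro rfl; simp at h
  refine ⟨?_, fun h => (mul_eq_zero.1 h).resolve_left ha⟩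
  by_cases h0 : x = 0
  · simp [h0]
  have := hx h0
  rcases lt_or_gt_of_ne h0 with h1 | h1
  · have hy : ¬ 0 < y := fun h => absurd (this.2 h) (not_lt.2 h1.le)
    have : a < 0 := by
      by_contra h'
      nlinarith
    nlinarith
  · have := this.1 h1
    have : 0 < a := by
      by_contra h'
      nlinarith
    positivity

/-- Each `i ∈ S` yields an almost balanced vertex and the cell whose lowest point it is; a cell arises
from at most two indices `i`. The error `5` comes from the vertex (`1`), the two zeros `i` and `j`,
and the points `p` and `q`. -/
theorem many_cells {ι : Type*} [Fintype ι] [DecidableEq ι] (L : Submodule ℝ (ι → ℝ))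
    (R S : Finset ι) (p q : ι)
    (hp : p ∉ R) (hq : q ∉ R) (hpq : p ≠ q) (hS : ∀ l, l ∈ S ↔ l ∉ R ∧ l ≠ p ∧ l ≠ q)
    (hS2 : 2 ≤ S.card)
    (h3 : ∀ a b c, a ∉ R → b ∉ R → c ∉ R → a ≠ b → a ≠ c → b ≠ c → ∀ x y z : ℝ,
      ∃ w ∈ L, (∀ r ∈ R, w r = 0) ∧ w a = x ∧ w b = y ∧ w c = z)
    (i3 : ∀ a b c, a ∉ R → b ∉ R → c ∉ R → a ≠ b → a ≠ c → b ≠ c →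
      ∀ w ∈ L, (∀ r ∈ R, w r = 0) → w a = 0 → w b = 0 → w c = 0 → w = 0) :
    ∃ 𝓕 : Finset (Finset ι), S.card ≤ 2 * 𝓕.card ∧ ∀ P ∈ 𝓕, p ∈ P ∧ Disjoint P R ∧
      |2 * (P.card : ℤ) - (S.card + 2)| ≤ 5 ∧
      ∃ y ∈ L, (∀ l ∈ P, 0 < y l) ∧ (∀ r ∈ R, y r = 0) ∧ ∀ l, l ∉ R → l ∉ P → y l < 0 := by
  have hV : ∀ i : {i // i ∈ S}, ∃ j ∈ S, j ≠ i ∧ ∃ v ∈ L, (∀ r ∈ R, v r = 0) ∧ v p = 1 ∧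
      v i = 0 ∧ v j = 0 ∧ |∑ l ∈ S, sgn (v l)| ≤ 1 := fun i =>
    vertex L R S p q hp hq hpq hS hS2 h3 i3 i i.2
  choose j hjS hji v hvL hvR hvp hvi hvj hvs using hV
  have hC := fun i : {i // i ∈ S} => cell L R p q hp hq hpq h3 i3 i (j i) ((hS i).1 i.2)
    ((hS (j i)).1 (hjS i)) (hji i) (v i) (hvL i) (hvR i) (hvp i) (hvi i) (hvj i)
  choose y hyL hyR hyv a b hab ha hb using hC
  have hv0 : ∀ i : {i // i ∈ S}, ∀ l, l ∉ R → l ≠ i → l ≠ j i → v i l ≠ 0 := by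
    intro i l hl hli hlj h
    have := i3 i (j i) l ((hS i).1 i.2).1 ((hS _).1 (hjS i)).1 hl (hji i).symm hli.symm hlj.symm
      (v i) (hvL i) (hvR i) (hvi i) (hvj i) h
    have h1 := hvp i
    rw [this] at h1; simp at h1
  have hpos : ∀ i l, v i l ≠ 0 → (0 < v i l ↔ 0 < y i l) := by
    intro i l h
    rw [← sgn_eq_one_iff, ← sgn_eq_one_iff, hyv i l h]
  have hy0 : ∀ i l, l ∉ R → y i l ≠ 0 := by
    intro i l hl h
    by_cases h1 : l = i
    · have := ha i; rw [← h1, h] at this; simp at this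
    by_cases h2 : l = j i
    · have := hb i; rw [← h2, h] at this; simp at this
    have h3 := hv0 i l hl h1 h2
    have h4 := hyv i l h3
    rw [h, sgn_zero] at h4
    rcases lt_or_gt_of_ne h3 with h3 | h3 <;> simp [sgn_neg, sgn_pos, h3] at h4
  let P : {i // i ∈ S} → Finset ι := fun i => univ.filter fun l => l ∉ R ∧ 0 < y i l
  have hP : ∀ i l, l ∈ P i ↔ l ∉ R ∧ 0 < y i l := fun i l => by simp [P]
  -- a cell with the sign vector of `i'` has `v i'` in its closure, so `v i q ≤ v i' q`
  have hle : ∀ i i', P i = P i' → v i q ≤ v i' q ∧ (v i q = v i' q → v i' i = 0) := by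
    intro i i' h
    have hs : ∀ l, l ∉ R → v i' l ≠ 0 → (0 < v i' l ↔ 0 < y i l) := by
      intro l hl h0
      rw [hpos i' l h0]
      have h1 := hP i l
      have h2 := hP i' l
      rw [h, h2] at h1
      simpa [hl] using h1
    have h1 := hab i (v i') (hvL i') (hvR i')
    rw [hvp] at h1
    have h2 := sgn_weak (ha i) (hs i ((hS i).1 i.2).1)
    have h3 := sgn_weak (hb i) (hs (j i) ((hS (j i)).1 (hjS i)).1)
    exact ⟨by linarith [h2.1, h3.1], fun h => h2.2 (by linarith [h2.1, h3.1])⟩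
  refine ⟨univ.image P, ?_, ?_⟩
  · have := Finset.card_le_mul_card_image (f := P) univ 2 (fun Q hQ => ?_)
    · simpa using this
    · obtain ⟨i', -, rfl⟩ := Finset.mem_image.1 hQ
      have hsub : (univ.filter fun i => P i = P i') ⊆ {i', ⟨j i', hjS i'⟩} := by
        intro i hi
        have hi := (Finset.mem_filter.1 hi).2
        have h1 := hle i i' hi
        have h2 := hle i' i hi.symm
        have h3 := h1.2 (le_antisymm h1.1 h2.1)
        by_contra hne
        simp only [Finset.mem_insert, Finset.mem_singleton, not_or] at hne
        exact hv0 i' i ((hS i).1 i.2).1 (fun h => hne.1 (Subtype.ext h))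
          (fun h => hne.2 (Subtype.ext h)) h3
      exact (Finset.card_le_card hsub).trans Finset.card_le_two
  · intro Q hQ
    obtain ⟨i, -, rfl⟩ := Finset.mem_image.1 hQ
    have hvp0 : v i p ≠ 0 := by rw [hvp]; exact one_ne_zero
    refine ⟨(hP i p).2 ⟨hp, (hpos i p hvp0).1 (by rw [hvp]; exact one_pos)⟩, ?_, ?_,
      y i, hyL i, fun l hl => ((hP i l).1 hl).2, hyR i, fun l hlR hlP =>
        lt_of_le_of_ne (not_lt.1 fun h => hlP ((hP i l).2 ⟨hlR, h⟩)) (hy0 i l hlR)⟩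
    · rw [Finset.disjoint_left]
      exact fun l hl => ((hP i l).1 hl).1
    · have e1 : ∀ T : Finset ι, (∀ l ∈ T, l ∉ R) →
          ∑ l ∈ T, sgn (y i l) = ∑ l ∈ T, (2 * (if 0 < y i l then 1 else 0) - 1) := by
        intro T hT
        refine Finset.sum_congr rfl fun l hl => ?_
        rcases lt_or_gt_of_ne (hy0 i l (hT l hl)) with h | h
        · simp [sgn_neg h, not_lt.2 h.le]
        · simp [sgn_pos h, h]
      have hpS : p ∉ S := fun h => ((hS p).1 h).2.1 rfl
      have hqS : q ∉ insert p S := fun h => by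
        rcases Finset.mem_insert.1 h with h | h
        · exact hpq h.symm
        · exact ((hS q).1 h).2.2 rfl
      have hPe : P i = (insert q (insert p S)).filter fun l => 0 < y i l := by
        ext l
        rw [hP, Finset.mem_filter, Finset.mem_insert, Finset.mem_insert, hS]
        by_cases h1 : l = p
        · subst h1; simp [hp]
        by_cases h2 : l = q
        · subst h2; simp [hq]
        simp [h1, h2]
      have e2 := e1 (insert q (insert p S)) (by
        intro l hl
        rcases Finset.mem_insert.1 hl with rfl | hl
        · exact hq
        rcases Finset.mem_insert.1 hl with rfl | hl
        · exact hp
        exact ((hS l).1 hl).1)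
      rw [Finset.sum_sub_distrib, ← Finset.mul_sum, Finset.sum_boole, ← hPe,
        Finset.sum_const, Finset.card_insert_of_notMem hqS, Finset.card_insert_of_notMem hpS,
        Finset.sum_insert hqS, Finset.sum_insert hpS] at e2
      -- `y` and `v` differ in sign on `S` only at `i` and `j i`
      have e3 : ∑ l ∈ S, sgn (y i l) = ∑ l ∈ S, sgn (v i l) +
          ((∑ l ∈ S, if l = i then sgn (y i l) else 0) +
            ∑ l ∈ S, if l = j i then sgn (y i l) else 0) := by
        rw [← Finset.sum_add_distrib, ← Finset.sum_add_distrib]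
        refine Finset.sum_congr rfl fun l hl => ?_
        by_cases h1 : l = i
        · rw [if_pos h1, if_neg (by rw [h1]; exact (hji i).symm), h1, hvi, sgn_zero]; ring
        by_cases h2 : l = j i
        · rw [if_neg h1, if_pos h2, h2, hvj, sgn_zero]; ring
        rw [if_neg h1, if_neg h2, hyv i l (hv0 i l ((hS l).1 hl).1 h1 h2)]; ring
      rw [Finset.sum_ite_eq' S _ (fun l => sgn (y i l)), if_pos i.2,
        Finset.sum_ite_eq' S _ (fun l => sgn (y i l)), if_pos (hjS i)] at e3
      have b1 := abs_le.1 (abs_sgn_le (y i p))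
      have b2 := abs_le.1 (abs_sgn_le (y i q))
      have b3 := abs_le.1 (abs_sgn_le (y i i))
      have b4 := abs_le.1 (abs_sgn_le (y i (j i)))
      have b5 := abs_le.1 (hvs i)
      simp only [nsmul_eq_mul, mul_one] at e2
      push_cast at e2
      rw [abs_le]
      constructor <;> linarith

/-! ### Counting balanced sign patterns -/

/-- The number of positive sides of balanced sign patterns in a space `L` of functions on `2d`
points whose elements are determined by their values at any `d - 1` points, these values being
arbitrary. The pattern of a cell on `Rᶜ` is combined with an arbitrary subset `Q` of `R` of the
right size. -/
theorem count {ι : Type*} [Fintype ι] [DecidableEq ι] (d : ℕ) (hd : 20 ≤ d)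
    (hcard : Fintype.card ι = 2 * d) (L : Submodule ℝ (ι → ℝ))
    (hU : ∀ Z : Finset ι, Z.card = d - 1 → ∀ f : ι → ℝ, ∃ w ∈ L, ∀ z ∈ Z, w z = f z)
    (hI : ∀ Z : Finset ι, Z.card = d - 1 → ∀ w ∈ L, (∀ z ∈ Z, w z = 0) → w = 0) :
    ∃ (p : ι) (G : Finset (Finset ι)),
      (∀ B ∈ G, B.card = d ∧ p ∈ B ∧ ∃ w ∈ L, (∀ i ∈ B, 0 < w i) ∧ ∀ i, i ∉ B → w i < 0) ∧
      2 ^ d * √d ≤ 2 ^ 11 * (G.card : ℝ) := by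
  obtain ⟨R, -, hR⟩ := Finset.exists_subset_card_eq (s := (univ : Finset ι)) (n := d - 4)
    (by rw [Finset.card_univ]; omega)
  have hRc : Rᶜ.card = d + 4 := by rw [Finset.card_compl]; omega
  obtain ⟨p, hp, q, hq, hpq⟩ := Finset.one_lt_card.1 (show 1 < Rᶜ.card by omega)
  have hS : ∀ l, l ∈ (Rᶜ.erase p).erase q ↔ l ∉ R ∧ l ≠ p ∧ l ≠ q := by
    intro l; simp only [Finset.mem_erase, Finset.mem_compl]; tauto
  have hSc : ((Rᶜ.erase p).erase q).card = d + 2 := by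
    rw [Finset.card_erase_of_mem (Finset.mem_erase.2 ⟨hpq.symm, hq⟩),
      Finset.card_erase_of_mem hp]; omega
  have hZ : ∀ a b c, a ∉ R → b ∉ R → c ∉ R → a ≠ b → a ≠ c → b ≠ c →
      (insert a (insert b (insert c R))).card = d - 1 := by
    intro a b c ha hb hc hab hac hbc
    rw [Finset.card_insert_of_notMem (by simp [*]), Finset.card_insert_of_notMem (by simp [*]),
      Finset.card_insert_of_notMem hc]
    omega
  obtain ⟨F, hF, hFP⟩ := many_cells L R _ p q (Finset.mem_compl.1 hp) (Finset.mem_compl.1 hq)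
    hpq hS (by omega)
    (by
      intro a b c ha hb hc hab hac hbc x y z
      obtain ⟨w, hwL, hw⟩ := hU _ (hZ a b c ha hb hc hab hac hbc)
        (fun l => if l = a then x else if l = b then y else if l = c then z else 0)
      refine ⟨w, hwL, fun r hr => ?_, ?_, ?_, ?_⟩
      · rw [hw r (by simp [hr]), if_neg (by rintro rfl; exact ha hr),
          if_neg (by rintro rfl; exact hb hr), if_neg (by rintro rfl; exact hc hr)]
      · rw [hw a (by simp)]; simp
      · rw [hw b (by simp)]; simp [hab.symm]
      · rw [hw c (by simp)]; simp [hac.symm, hbc.symm])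
    (by
      intro a b c ha hb hc hab hac hbc w hwL hwR hwa hwb hwc
      refine hI _ (hZ a b c ha hb hc hab hac hbc) w hwL fun z hz => ?_
      simp only [Finset.mem_insert] at hz
      rcases hz with rfl | rfl | rfl | h
      exacts [hwa, hwb, hwc, hwR z h])
  have hPd : ∀ P ∈ F, P.card ≤ d ∧ 4 ≤ P.card ∧ 2 * P.card ≤ d + 9 ∧ d ≤ 2 * P.card + 1 := by
    intro P hP
    have := abs_le.1 (hFP P hP).2.2.1
    omega
  refine ⟨p, F.biUnion fun P => (R.powersetCard (d - P.card)).image (P ∪ ·), ?_, ?_⟩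
  · intro B hB
    obtain ⟨P, hP, hB⟩ := Finset.mem_biUnion.1 hB
    obtain ⟨Q, hQ, rfl⟩ := Finset.mem_image.1 hB
    obtain ⟨hQR, hQc⟩ := Finset.mem_powersetCard.1 hQ
    obtain ⟨hpP, hPR, -, y, hyL, hyP, hyR, hyN⟩ := hFP P hP
    -- `R`, of size `d - 4`, is padded by three points to the `d - 1` points required by `hU`
    obtain ⟨z, hzL, hz⟩ := hU (insert p (insert q (insert (Classical.choose
        (Finset.card_pos.1 (show 0 < ((Rᶜ.erase p).erase q).card by omega))) R)))
      (by
        have h := (hS _).1 (Classical.choose_spec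
          (Finset.card_pos.1 (show 0 < ((Rᶜ.erase p).erase q).card by omega)))
        exact hZ _ _ _ (Finset.mem_compl.1 hp) (Finset.mem_compl.1 hq) h.1 hpq h.2.1.symm
          h.2.2.symm)
      (fun l => if l ∈ Q then 1 else -1)
    obtain ⟨ε, hε, hs⟩ := perturb y z
    refine ⟨?_, Finset.mem_union_left _ hpP, y + ε • z, L.add_mem hyL (L.smul_mem _ hzL), ?_, ?_⟩
    · rw [Finset.card_union_of_disjoint (hPR.mono_right hQR), hQc]
      have := hPd P hP
      omega
    · intro l hl
      rcases Finset.mem_union.1 hl with h | h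
      · have h1 := hyP l h
        have := hs l h1.ne'
        rw [sgn_pos h1, sgn_eq_one_iff] at this
        simpa using this
      · have h1 := hz l (by simp [hQR h])
        rw [if_pos h] at h1
        simp [hyR l (hQR h), h1, hε]
    · intro l hl
      rw [Finset.mem_union, not_or] at hl
      by_cases h : l ∈ R
      · have h1 := hz l (by simp [h])
        rw [if_neg hl.2] at h1
        simp [hyR l h, h1, hε]
      · have h1 := hyN l h hl.1
        have h2 := hs l h1.ne
        rw [sgn_neg h1, sgn_eq_neg_one_iff] at h2
        simpa using h2
  · have hc : (F.biUnion fun P => (R.powersetCard (d - P.card)).image (P ∪ ·)).card =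
        ∑ P ∈ F, (d - 4).choose (d - P.card) := by
      rw [Finset.card_biUnion]
      · refine Finset.sum_congr rfl fun P hP => ?_
        rw [Finset.card_image_of_injOn, Finset.card_powersetCard, hR]
        intro Q hQ Q' hQ' h
        have hPR := (hFP P hP).2.1
        have h1 := (Finset.mem_powersetCard.1 (Finset.mem_coe.1 hQ)).1
        have h2 := (Finset.mem_powersetCard.1 (Finset.mem_coe.1 hQ')).1
        have e : ∀ X ⊆ R, (P ∪ X) \ P = X := fun X hX =>
          Finset.union_sdiff_cancel_left (hPR.mono_right hX)
        rw [← e Q h1, ← e Q' h2]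
        exact congrArg (· \ P) h
      · intro P hP P' hP' hne
        change Disjoint ((R.powersetCard (d - P.card)).image (P ∪ ·))
          ((R.powersetCard (d - P'.card)).image (P' ∪ ·))
        rw [Finset.disjoint_left]
        intro X hX hX'
        obtain ⟨Q, hQ, rfl⟩ := Finset.mem_image.1 hX
        obtain ⟨Q', hQ', h⟩ := Finset.mem_image.1 hX'
        have h1 := (Finset.mem_powersetCard.1 hQ).1
        have h2 := (Finset.mem_powersetCard.1 hQ').1
        have e : ∀ Y ∈ F, ∀ X ⊆ R, (Y ∪ X) \ R = Y := fun Y hY X hX => by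
          rw [Finset.union_sdiff_distrib, Finset.sdiff_eq_empty_iff_subset.2 hX,
            Finset.union_empty, Finset.sdiff_eq_self_of_disjoint (hFP Y hY).2.1]
        apply hne
        rw [← e P hP Q h1, ← e P' hP' Q' h2]
        exact congrArg (· \ R) h.symm
    rw [hc]
    have hdpos : (0 : ℝ) < d := by exact_mod_cast (by omega : 0 < d)
    have key : ∀ P ∈ F, (2 : ℝ) ^ d * √d ≤ 2 ^ 10 * d * ((d - 4).choose (d - P.card) : ℝ) := by
      intro P hP
      have hb := hPd P hP
      have := near_central_choose (d - P.card) (P.card - 4) d (by omega) (by omega) (by omega) hd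
      calc (2 : ℝ) ^ d * √d ≤ 2 ^ 10 * √d * ((d - 4).choose (d - P.card) : ℝ) * √d := by gcongr
        _ = 2 ^ 10 * (√d * √d) * ((d - 4).choose (d - P.card) : ℝ) := by ring
        _ = _ := by rw [Real.mul_self_sqrt hdpos.le]
    have h1 := Finset.sum_le_sum key
    rw [Finset.sum_const, nsmul_eq_mul, ← Finset.mul_sum] at h1
    have h2 : (d : ℝ) ≤ 2 * F.card := by
      exact_mod_cast (by omega : d ≤ 2 * F.card)
    push_cast
    have h3 : (d : ℝ) * (2 ^ d * √d) ≤
        d * (2 ^ 11 * ∑ P ∈ F, ((d - 4).choose (d - P.card) : ℝ)) := by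
      calc (d : ℝ) * (2 ^ d * √d) ≤ 2 * F.card * (2 ^ d * √d) := by gcongr
        _ = 2 * (F.card * (2 ^ d * √d)) := by ring
        _ ≤ 2 * (2 ^ 10 * d * ∑ P ∈ F, ((d - 4).choose (d - P.card) : ℝ)) := by gcongr
        _ = _ := by ring
    exact le_of_mul_le_mul_left h3 hdpos

/-! ### From affine dependences to crossings -/

theorem eq_zero_of_affineIndependent {d : ℕ} {S : Finset (Pt d)}
    (hS : AffineIndependent ℝ ((↑) : {x // x ∈ (S : Set (Pt d))} → Pt d)) (w : Pt d → ℝ)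
    (h0 : ∑ x ∈ S, w x = 0) (h1 : ∑ x ∈ S, w x • x = 0) : ∀ x ∈ S, w x = 0 := by
  intro x hx
  exact affineIndependent_iff.1 hS S.attach (fun x => w x.1)
    ((Finset.sum_attach S w).trans h0) ((Finset.sum_attach S fun x => w x • x).trans h1)
    ⟨x, hx⟩ (Finset.mem_attach S ⟨x, hx⟩)

theorem crossingPair_of_dependence {d : ℕ} {T B : Finset (Pt d)} (hT : GenPos d T) (hBT : B ⊆ T)
    (hB : B.card ≤ d + 1) (hC : (T \ B).card ≤ d + 1) (hne : B.Nonempty) (w : Pt d → ℝ)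
    (h0 : ∑ x ∈ T, w x = 0) (h1 : ∑ x ∈ T, w x • x = 0) (hpos : ∀ x ∈ B, 0 < w x)
    (hneg : ∀ x ∈ T \ B, w x < 0) : CrossingPair d B (T \ B) := by
  refine ⟨Finset.disjoint_sdiff, ?_⟩
  rw [← Finset.sum_sdiff hBT] at h0 h1
  have hW : 0 < ∑ x ∈ B, w x := Finset.sum_pos hpos hne
  set W := ∑ x ∈ B, w x with hWdef
  have hC1 := sum_smul_mem_intrinsicInterior d (T \ B) (hT _ Finset.sdiff_subset hC) (fun x => -(W⁻¹ * w x))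
    (fun x hx => by have := mul_pos (inv_pos.2 hW) (neg_pos.2 (hneg x hx)); linarith)
    (by
      rw [Finset.sum_neg_distrib, ← Finset.mul_sum, show ∑ x ∈ T \ B, w x = - W by linarith]
      field_simp)
  have hB1 := sum_smul_mem_intrinsicInterior d B (hT _ hBT hB) (fun x => W⁻¹ * w x)
    (fun x hx => mul_pos (inv_pos.2 hW) (hpos x hx))
    (by rw [← Finset.mul_sum]; exact inv_mul_cancel₀ hW.ne')
  refine ⟨_, hB1, ?_⟩
  convert hC1 using 1
  simp only [neg_smul, mul_smul, Finset.sum_neg_distrib, ← Finset.smul_sum]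
  rw [← smul_neg, eq_neg_of_add_eq_zero_right h1]

/-- Every `2d` points in general position span at least `2 ^ (d - 11) * √d` crossing pairs; the
sides `B` share a point `p`, so that no pair is listed twice. -/
theorem crossings_of_two_mul (d : ℕ) (hd : 20 ≤ d) (T : Finset (Pt d)) (hT : GenPos d T)
    (hcard : T.card = 2 * d) :
    ∃ (p : Pt d) (G : Finset (Finset (Pt d))),
      (∀ B ∈ G, B ⊆ T ∧ B.card = d ∧ p ∈ B ∧ CrossingPair d B (T \ B)) ∧
      2 ^ d * √d ≤ 2 ^ 11 * (G.card : ℝ) := by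
  classical
  let Φ : (T → ℝ) →ₗ[ℝ] ℝ × Pt d :=
    Fintype.linearCombination ℝ (fun t : T => ((1 : ℝ), (t : Pt d)))
  have hΦ : ∀ w, w ∈ LinearMap.ker Φ ↔ ∑ t, w t = 0 ∧ ∑ t, w t • (t : Pt d) = 0 := by
    intro w
    rw [LinearMap.mem_ker, Fintype.linearCombination_apply, Prod.ext_iff, Prod.fst_sum,
      Prod.snd_sum]
    simp
  have hext : ∀ w : T → ℝ, ∃ w' : Pt d → ℝ, ∀ t : T, w' t = w t := fun w =>
    ⟨fun x => if h : x ∈ T then w ⟨x, h⟩ else 0, fun t => by simp⟩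
  have hker : ∀ w : T → ℝ, w ∈ LinearMap.ker Φ → ∀ w' : Pt d → ℝ, (∀ t : T, w' t = w t) →
      ∑ x ∈ T, w' x = 0 ∧ ∑ x ∈ T, w' x • x = 0 := by
    intro w hw w' hw'
    obtain ⟨h0, h1⟩ := (hΦ w).1 hw
    rw [← Finset.sum_coe_sort T w', ← Finset.sum_coe_sort T (fun x => w' x • x)]
    simp only [hw']
    exact ⟨h0, h1⟩
  have hI : ∀ Z : Finset T, Z.card = d - 1 → ∀ w ∈ LinearMap.ker Φ,
      (∀ z ∈ Z, w z = 0) → w = 0 := by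
    intro Z hZ w hw hwZ
    obtain ⟨w', hw'⟩ := hext w
    obtain ⟨h0, h1⟩ := hker w hw w' hw'
    have hsub : T \ Z.map (Function.Embedding.subtype _) ⊆ T := Finset.sdiff_subset
    have hz : ∀ x ∈ T, x ∉ T \ Z.map (Function.Embedding.subtype _) → w' x = 0 := by
      intro x hx hx'
      have : x ∈ Z.map (Function.Embedding.subtype _) := by
        by_contra h; exact hx' (Finset.mem_sdiff.2 ⟨hx, h⟩)
      obtain ⟨t, ht, rfl⟩ := Finset.mem_map.1 this
      exact (hw' t).trans (hwZ t ht)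
    have hcardS : (T \ Z.map (Function.Embedding.subtype _)).card ≤ d + 1 := by
      rw [Finset.card_sdiff_of_subset, Finset.card_map, hZ, hcard]
      · omega
      · intro x hx
        obtain ⟨t, ht, rfl⟩ := Finset.mem_map.1 hx
        exact t.2
    have := eq_zero_of_affineIndependent (hT _ hsub hcardS) w'
      ((Finset.sum_subset hsub hz).trans h0)
      ((Finset.sum_subset hsub fun x hx hx' => by rw [hz x hx hx', zero_smul]).trans h1)
    funext t
    rw [← hw' t]
    by_cases h : (t : Pt d) ∈ T \ Z.map (Function.Embedding.subtype _)
    · exact this _ h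
    · exact hz _ t.2 h
  have hrank : d - 1 ≤ Module.finrank ℝ (LinearMap.ker Φ) := by
    have h1 := LinearMap.finrank_range_add_finrank_ker Φ
    have h2 := Submodule.finrank_le (LinearMap.range Φ)
    rw [Module.finrank_prod, finrank_euclideanSpace, Fintype.card_fin, Module.finrank_self] at h2
    rw [Module.finrank_pi, Fintype.card_coe, hcard] at h1
    omega
  have hU : ∀ Z : Finset T, Z.card = d - 1 → ∀ f : T → ℝ, ∃ w ∈ LinearMap.ker Φ,
      ∀ z ∈ Z, w z = f z := by
    intro Z hZ f
    let e : LinearMap.ker Φ →ₗ[ℝ] (Z → ℝ) :=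
      (LinearMap.funLeft ℝ ℝ ((↑) : Z → T)).comp (LinearMap.ker Φ).subtype
    have hinj : Function.Injective e := by
      rw [← LinearMap.ker_eq_bot, LinearMap.ker_eq_bot']
      intro w hw
      apply Subtype.ext
      exact hI Z hZ w w.2 fun z hz => congrFun hw ⟨z, hz⟩
    have hle := LinearMap.finrank_le_finrank_of_injective hinj
    have hZr : Module.finrank ℝ (Z → ℝ) = d - 1 := by
      rw [Module.finrank_pi, Fintype.card_coe, hZ]
    obtain ⟨w, hw⟩ := (LinearMap.injective_iff_surjective_of_finrank_eq_finrank
      (by omega)).1 hinj (fun z => f z)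
    exact ⟨w, w.2, fun z hz => congrFun hw ⟨z, hz⟩⟩
  obtain ⟨p, G, hG, hGc⟩ := count d hd (by rw [Fintype.card_coe, hcard]) (LinearMap.ker Φ) hU hI
  refine ⟨p, G.map (Finset.mapEmbedding (Function.Embedding.subtype _)).toEmbedding, ?_, ?_⟩
  · intro B' hB'
    obtain ⟨B, hB, rfl⟩ := Finset.mem_map.1 hB'
    obtain ⟨hBc, hpB, w, hwL, hwp, hwn⟩ := hG B hB
    change B.map (Function.Embedding.subtype _) ⊆ T ∧
      (B.map (Function.Embedding.subtype _)).card = d ∧ _ ∈ B.map (Function.Embedding.subtype _) ∧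
      CrossingPair d (B.map (Function.Embedding.subtype _))
        (T \ B.map (Function.Embedding.subtype _))
    have hsub : B.map (Function.Embedding.subtype _) ⊆ T := by
      intro x hx
      obtain ⟨t, ht, rfl⟩ := Finset.mem_map.1 hx
      exact t.2
    have hc : (B.map (Function.Embedding.subtype _)).card = d := by rw [Finset.card_map, hBc]
    have hp : (p : Pt d) ∈ B.map (Function.Embedding.subtype _) := Finset.mem_map.2 ⟨p, hpB, rfl⟩
    obtain ⟨w', hw'⟩ := hext w
    obtain ⟨h0, h1⟩ := hker w hwL w' hw'
    refine ⟨hsub, hc, hp, crossingPair_of_dependence hT hsub (by omega) ?_ ⟨_, hp⟩ w' h0 h1 ?_ ?_⟩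
    · rw [Finset.card_sdiff_of_subset hsub, hc, hcard]; omega
    · intro x hx
      obtain ⟨t, ht, rfl⟩ := Finset.mem_map.1 hx
      exact (hwp t ht).trans_eq (hw' t).symm
    · intro x hx
      obtain ⟨hxT, hxB⟩ := Finset.mem_sdiff.1 hx
      exact (hw' ⟨x, hxT⟩).trans_lt
        (hwn ⟨x, hxT⟩ fun h => hxB (Finset.mem_map.2 ⟨_, h, rfl⟩))
  · rwa [Finset.card_map]

/-- The `d`-dimensional rectilinear crossing number of `K_n^d` is
`Ω(2^d √d) · C(n, 2d)`. -/
theorem crossing_number_Knd_lower_bound :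
    ∃ (c : ℝ) (d₀ : ℕ), 0 < c ∧
      ∀ d : ℕ, d₀ ≤ d → ∀ n : ℕ, 2 * d ≤ n →
        ∀ V : Finset (Pt d), V.card = n → GenPos d V →
          c * 2 ^ d * Real.sqrt d * (n.choose (2 * d)) ≤
            ((crossingHyperedgePairs d V).ncard : ℝ) := by
  classical
  refine ⟨1 / 2 ^ 11, 20, by positivity, ?_⟩
  intro d hd n hn V hV hgen
  have hloc : ∀ T : {T // T ∈ V.powersetCard (2 * d)},
      ∃ (p : Pt d) (G : Finset (Finset (Pt d))),
      (∀ B ∈ G, B ⊆ T ∧ B.card = d ∧ p ∈ B ∧ CrossingPair d B (T \ B)) ∧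
      2 ^ d * √d ≤ 2 ^ 11 * (G.card : ℝ) := fun T => by
    obtain ⟨hTV, hTc⟩ := Finset.mem_powersetCard.1 T.2
    exact crossings_of_two_mul d hd T (fun S hS => hgen S (hS.trans hTV)) hTc
  choose p G hG hGc using hloc
  let A : Finset (Σ _ : {T // T ∈ V.powersetCard (2 * d)}, Finset (Pt d)) := univ.sigma G
  let f : (Σ _ : {T // T ∈ V.powersetCard (2 * d)}, Finset (Pt d)) → Sym2 (Finset (Pt d)) :=
    fun x => s(x.2, x.1.1 \ x.2)
  -- `T` is recovered as the union of the two sides, `B` as the side containing `p T`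
  have hinj : Set.InjOn f A := by
    rintro ⟨T, B⟩ hx ⟨T', B'⟩ hx' h
    have hB := hG T B (Finset.mem_sigma.1 hx).2
    have hB' := hG T' B' (Finset.mem_sigma.1 hx').2
    have hTT : T = T' := by
      apply Subtype.ext
      rw [← Finset.union_sdiff_of_subset hB.1, ← Finset.union_sdiff_of_subset hB'.1]
      rcases Sym2.eq_iff.1 h with ⟨h1, h2⟩ | ⟨h1, h2⟩
      · simp only at h1 h2
        rw [h2, h1]
      · simp only at h1 h2
        rw [h2, ← h1, Finset.union_comm]
    subst hTT
    rcases Sym2.eq_iff.1 h with ⟨h1, -⟩ | ⟨h1, -⟩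
    · simp only at h1
      rw [h1]
    · simp only at h1
      exact absurd hB'.2.2.1 (Finset.mem_sdiff.1 (h1 ▸ hB.2.2.1)).2
  have hfin : (crossingHyperedgePairs d V).Finite := by
    refine ((V.powerset ×ˢ V.powerset).finite_toSet.image fun x => s(x.1, x.2)).subset ?_
    rintro _ ⟨B, C, rfl, hB, hC, -⟩
    exact ⟨(B, C), by simp [hB, hC], rfl⟩
  have hsub : (↑(A.image f) : Set (Sym2 (Finset (Pt d)))) ⊆ crossingHyperedgePairs d V := by
    intro x hx
    obtain ⟨⟨T, B⟩, hTB, rfl⟩ := Finset.mem_image.1 (Finset.mem_coe.1 hx)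
    obtain ⟨h1, h2, -, h3⟩ := hG T B (Finset.mem_sigma.1 hTB).2
    obtain ⟨hTV, hTc⟩ := Finset.mem_powersetCard.1 T.2
    refine ⟨B, T \ B, rfl, h1.trans hTV, Finset.sdiff_subset.trans hTV, h2, ?_, h3⟩
    rw [Finset.card_sdiff_of_subset h1, h2, hTc]
    omega
  have hcard : A.card ≤ (crossingHyperedgePairs d V).ncard := by
    rw [← Finset.card_image_of_injOn hinj, ← Set.ncard_coe_finset]
    exact Set.ncard_le_ncard hsub hfin
  have hA : (n.choose (2 * d) : ℝ) * (2 ^ d * √d) ≤ 2 ^ 11 * A.card := by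
    have h1 := Finset.sum_le_sum fun T (_ : T ∈ univ) => hGc T
    rw [Finset.sum_const, nsmul_eq_mul, ← Finset.mul_sum, Finset.card_univ, Fintype.card_coe,
      Finset.card_powersetCard, hV] at h1
    rw [Finset.card_sigma]
    push_cast
    exact h1
  have hcard' : (A.card : ℝ) ≤ (crossingHyperedgePairs d V).ncard := by exact_mod_cast hcard
  linarith
end
end

section
/- There exist a constant c > 0 and a natural number d₀ such that for every integer d ≥ d₀ the following holds: for every set V of 2d points in general position in ℝ^d that is NOT in convex position (i.e., some point of V lies in the convex hull of the remaining 2d−1 points), the number of unordered pairs {B, C} of disjoint d-element subsets of V such that the relative interiors of the convex hulls of B and of C have a common point is at least c · 2^d · d^{3/2}. -/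
/-!
The bound is obtained from the linear space `W` of affine dependences of `V`, which has dimension
`d - 1` inside `ℝ^V`. A vector of `W` that is positive on `B` and negative on `C = V \ B` gives,
after normalisation, a common point of the relative interiors of the hulls of `B` and `C`
(`crossing_of_realizable`). So it suffices to bound from below the number of *balanced* sign
patterns of `W`, those with `d` plus signs and `d` minus signs; each crossing pair accounts for at
most two of them (`card_balanced_le`).

General position says that the values of a vector of `W` on any `d - 1` coordinates can be
prescribed (`exists_dependence`), and it implies that a nonzero vector of `W` has at most `d - 1`
zeros (`card_zeros_dependence`). Hence the zeros of any nonzero vector of `W` can be perturbed to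
arbitrary signs.

For a set `Z` of `d - 3` coordinates, the vectors of `W` vanishing on `Z` form a plane. A path in
this plane from some `ν` to `-ν` that avoids `0` contains, by connectedness, a vector with at most
`h` positive and at least `h` nonnegative coordinates outside `Z`, where `h = ⌊(d + 3) / 2⌋`
(`exists_halving`). Perturbing it gives sign patterns with a fixed set of `h` plus signs outside
`Z` and arbitrary signs on `Z` (`exists_balanced_cube`).

Now fix a set `R` of `d - 6` coordinates, and apply this to `Z = R ∪ Y` for all triples `Y`
disjoint from `R`. Consider the patterns outside `R` that have between `h` and `h + 3` plus signs
and that are compatible with arbitrary signs on `R`: this family contains, for each of the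
`C(d + 6, 3)` triples `Y`, a full cube with set of directions `Y`, so it has at least `C(d + 6, 3)`
members by the dual form of Pajor's inequality (`card_strongly_shattered_le`). Each member is made
balanced by choosing about half of `R`, in at least a constant times `2^d / d` ways. The number of
balanced patterns is thus at least a constant times `d^3 · 2^d / d = 2^d d^2`, which is at least
`2^d d^{3/2}`.
-/

noncomputable section

/-! ### Realisable sign patterns -/

/-- `P` is the set of positive coordinates of some vector of `W` without zero coordinates. -/
def Realizable {ι : Type*} (W : Submodule ℝ (ι → ℝ)) (P : Finset ι) : Prop :=
  ∃ x ∈ W, ∀ i, (i ∈ P → 0 < x i) ∧ (i ∉ P → x i < 0)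

lemma realizable_of_perturb {ι : Type*} [Finite ι] (W : Submodule ℝ (ι → ℝ)) (P : Finset ι)
    (x y : ι → ℝ) (hx : x ∈ W) (hy : y ∈ W) (hpos : ∀ i ∈ P, 0 ≤ x i) (hneg : ∀ i ∉ P, x i ≤ 0)
    (hzero : ∀ i, x i = 0 → (i ∈ P → 0 < y i) ∧ (i ∉ P → y i < 0)) : Realizable W P := by
  have key : ∀ᶠ ε : ℝ in nhdsWithin 0 (Set.Ioi 0),
      ∀ i, (i ∈ P → 0 < x i + ε * y i) ∧ (i ∉ P → x i + ε * y i < 0) := by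
    rw [Filter.eventually_all]
    intro i
    have hc : Filter.Tendsto (fun ε : ℝ => x i + ε * y i) (nhdsWithin 0 (Set.Ioi 0))
        (nhds (x i)) := by
      have : Continuous (fun ε : ℝ => x i + ε * y i) := by fun_prop
      have h := this.tendsto 0
      simp only [zero_mul, add_zero] at h
      exact h.mono_left nhdsWithin_le_nhds
    by_cases h0 : x i = 0
    · filter_upwards [self_mem_nhdsWithin] with ε hε
      have hε : 0 < ε := hε
      rw [h0]
      refine ⟨fun hi => ?_, fun hi => ?_⟩
      · have := (hzero i h0).1 hi
        positivity
      · have := mul_neg_of_pos_of_neg hε ((hzero i h0).2 hi)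
        linarith
    · by_cases hi : i ∈ P
      · have h1 : 0 < x i := lt_of_le_of_ne (hpos i hi) (Ne.symm h0)
        filter_upwards [hc.eventually (lt_mem_nhds h1)] with ε hε
        exact ⟨fun _ => hε, fun h => absurd hi h⟩
      · have h1 : x i < 0 := lt_of_le_of_ne (hneg i hi) h0
        filter_upwards [hc.eventually (gt_mem_nhds h1)] with ε hε
        exact ⟨fun h => absurd h hi, fun _ => hε⟩
  obtain ⟨ε, hε⟩ := key.exists
  exact ⟨x + ε • y, W.add_mem hx (W.smul_mem ε hy), hε⟩

lemma isClosed_card_nonneg {ι : Type*} (S : Finset ι) (h : ℕ) (φ : ℝ → ι → ℝ)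
    (hφ : ∀ i, Continuous fun t => φ t i) :
    IsClosed {t | h ≤ (S.filter fun i => 0 ≤ φ t i).card} := by
  rw [← isOpen_compl_iff, isOpen_iff_eventually]
  intro t₀ ht₀
  have : ∀ᶠ t in nhds t₀, ∀ i ∈ S, φ t₀ i < 0 → φ t i < 0 := by
    rw [Filter.eventually_all_finset]
    intro i _
    by_cases hi : φ t₀ i < 0
    · filter_upwards [(hφ i).continuousAt.eventually (gt_mem_nhds hi)] with t ht _ using ht
    · exact Filter.Eventually.of_forall fun t h => absurd h hi
  filter_upwards [this] with t ht
  simp only [Set.mem_compl_iff, Set.mem_ofPred_eq, not_le] at ht₀ ⊢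
  refine lt_of_le_of_lt (Finset.card_le_card fun i hi => ?_) ht₀
  rw [Finset.mem_filter] at hi ⊢
  refine ⟨hi.1, ?_⟩
  by_contra hlt
  exact absurd (ht i hi.1 (not_le.1 hlt)) (not_lt.2 hi.2)

/-- A discrete intermediate value theorem: a continuous path of vectors that passes through some
vector and its negative contains a vector with at most `h` positive and at least `h` nonnegative
entries among the coordinates in `S`, where `h` is half of the cardinality of `S`, rounded down. -/
lemma exists_halving_s2 {ι : Type*} (S : Finset ι) (φ : ℝ → ι → ℝ)
    (hφ : ∀ i, Continuous fun t => φ t i) (hsymm : ∀ i, φ (-1) i = - φ 1 i) :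
    ∃ t, (S.filter fun i => 0 < φ t i).card ≤ S.card / 2 ∧
      S.card / 2 ≤ (S.filter fun i => 0 ≤ φ t i).card := by
  set h := S.card / 2 with hh
  have hsplit : ∀ t, (S.filter fun i => 0 < φ t i).card
      + (S.filter fun i => 0 ≤ -φ t i).card = S.card := by
    intro t
    rw [← Finset.card_filter_add_card_filter_not (s := S) (fun i => 0 < φ t i)]
    simp
  have hle : ∀ t, (S.filter fun i => 0 < φ t i).card ≤ (S.filter fun i => 0 ≤ φ t i).card :=
    fun t => Finset.card_le_card
      (Finset.monotone_filter_right S fun i _ (hi : 0 < φ t i) => hi.le)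
  have hA := isClosed_card_nonneg S h φ hφ
  have hB := isClosed_card_nonneg S (S.card - h) (fun t i => -φ t i) (fun i => (hφ i).neg)
  have e1 : (S.filter fun i => 0 ≤ φ (-1) i).card = (S.filter fun i => 0 ≤ -φ 1 i).card := by
    simp only [hsymm]
  have e2 : (S.filter fun i => 0 ≤ -φ (-1) i).card = (S.filter fun i => 0 ≤ φ 1 i).card := by
    simp only [hsymm, neg_neg]
  obtain ⟨t, -, ht1, ht2⟩ := isPreconnected_closed_iff.1 (isPreconnected_univ (α := ℝ)) _ _ hA hB
    (fun t _ => by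
      have := hsplit t
      have := hle t
      simp only [Set.mem_union, Set.mem_ofPred_eq]
      omega)
    (by
      by_cases hc : h ≤ (S.filter fun i => 0 ≤ φ 1 i).card
      · exact ⟨1, trivial, hc⟩
      · refine ⟨-1, trivial, ?_⟩
        have := hsplit 1
        have := hle 1
        simp only [Set.mem_ofPred_eq, e1]
        omega)
    (by
      by_cases hc : S.card - h ≤ (S.filter fun i => 0 ≤ -φ 1 i).card
      · exact ⟨1, trivial, hc⟩
      · refine ⟨-1, trivial, ?_⟩
        have := hsplit 1
        have := hle 1
        simp only [Set.mem_ofPred_eq, e2]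
        omega)
  refine ⟨t, ?_, ht1⟩
  have := hsplit t
  simp only [Set.mem_ofPred_eq] at ht2
  omega

/-- Every set `Z` of `d - 3` coordinates is the set of directions of a cube of realisable sign
patterns: there is a set `Q` of half of the other `d + 3` coordinates, rounded down, such that all
sets `Q ∪ U` with `U ⊆ Z` are realisable. -/
lemma exists_balanced_cube {ι : Type*} [Fintype ι] [DecidableEq ι] (d : ℕ) (hd : 3 ≤ d)
    (hcard : Fintype.card ι = 2 * d) (W : Submodule ℝ (ι → ℝ))
    (H1 : ∀ Z : Finset ι, Z.card ≤ d - 1 → ∀ ζ : ι → ℝ, ∃ x ∈ W, ∀ i ∈ Z, x i = ζ i)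
    (H2 : ∀ x ∈ W, x ≠ 0 → (Finset.univ.filter fun i => x i = 0).card ≤ d - 1)
    (Z : Finset ι) (hZ : Z.card = d - 3) :
    ∃ Q, Disjoint Q Z ∧ Q.card = (d + 3) / 2 ∧ ∀ U ⊆ Z, Realizable W (Q ∪ U) := by
  have hZc : Zᶜ.card = d + 3 := by rw [Finset.card_compl]; omega
  -- two linearly independent vectors of `W` vanishing on `Z`
  obtain ⟨j, hj, k, hk, hjk⟩ := Finset.one_lt_card.1 (by omega : 1 < Zᶜ.card)
  rw [Finset.mem_compl] at hj hk
  have hZ2 : (insert j (insert k Z)).card ≤ d - 1 := by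
    rw [Finset.card_insert_of_notMem (by simp [hjk, hj]), Finset.card_insert_of_notMem hk]
    omega
  obtain ⟨x, hxW, hx⟩ := H1 _ hZ2 (fun i => if i = j then 1 else 0)
  obtain ⟨ν, hνW, hν⟩ := H1 _ hZ2 (fun i => if i = k then 1 else 0)
  have hxj : x j = 1 := by rw [hx j (by simp)]; simp
  have hxk : x k = 0 := by rw [hx k (by simp)]; simp [Ne.symm hjk]
  have hνj : ν j = 0 := by rw [hν j (by simp)]; simp [hjk]
  have hνk : ν k = 1 := by rw [hν k (by simp)]; simp
  have hxZ : ∀ i ∈ Z, x i = 0 := by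
    intro i hi
    rw [hx i (by simp [hi]), if_neg]
    rintro rfl
    exact hj hi
  have hνZ : ∀ i ∈ Z, ν i = 0 := by
    intro i hi
    rw [hν i (by simp [hi]), if_neg]
    rintro rfl
    exact hk hi
  let φ : ℝ → ι → ℝ := fun t => (1 - |t|) • x + t • ν
  have hφZ : ∀ t, ∀ i ∈ Z, φ t i = 0 := by
    intro t i hi
    simp [φ, hνZ i hi, hxZ i hi]
  have hφW : ∀ t, φ t ∈ W := fun t => W.add_mem (W.smul_mem _ hxW) (W.smul_mem _ hνW)
  have hφ0 : ∀ t, φ t ≠ 0 := by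
    intro t h0
    have e1 : φ t j = 1 - |t| := by simp [φ, hxj, hνj]
    have e2 : φ t k = t := by simp [φ, hxk, hνk]
    rw [h0, Pi.zero_apply] at e1 e2
    rw [← e2] at e1
    norm_num at e1
  obtain ⟨t, ht1, ht2⟩ := exists_halving_s2 Zᶜ φ
    (fun i => by simp only [φ, Pi.add_apply, Pi.smul_apply]; fun_prop)
    (fun i => by simp [φ])
  rw [hZc] at ht1 ht2
  obtain ⟨Q, hQ1, hQ2, hQ3⟩ := Finset.exists_subsuperset_card_eq
    (Finset.monotone_filter_right Zᶜ fun i _ (hi : 0 < φ t i) => hi.le) ht1 ht2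
  have hQZ : ∀ i ∈ Q, i ∉ Z := fun i hi =>
    Finset.mem_compl.1 (Finset.mem_filter.1 (hQ2 hi)).1
  refine ⟨Q, Finset.disjoint_left.2 hQZ, hQ3, fun U hU => ?_⟩
  obtain ⟨y, hyW, hy⟩ := H1 _ (H2 _ (hφW t) (hφ0 t)) (fun i => if i ∈ Q ∪ U then 1 else -1)
  refine realizable_of_perturb W _ (φ t) y (hφW t) hyW ?_ ?_ ?_
  · intro i hi
    rcases Finset.mem_union.1 hi with h | h
    · exact (Finset.mem_filter.1 (hQ2 h)).2
    · exact (hφZ t i (hU h)).ge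
  · intro i hi
    rw [Finset.mem_union, not_or] at hi
    by_cases h : i ∈ Z
    · exact (hφZ t i h).le
    · by_contra hlt
      exact hi.1 (hQ1 (Finset.mem_filter.2 ⟨Finset.mem_compl.2 h, not_le.1 hlt⟩))
  · intro i hi
    rw [hy i (by simpa using hi)]
    exact ⟨fun h => by simp [h], fun h => by rw [if_neg h]; norm_num⟩

/-! ### Counting balanced sign patterns -/

/-- A family of sets is at least as large as the family of sets it strongly shatters, that is, of
the sets `Z` such that the family contains all `Q ∪ Y`, `Y ⊆ Z`, for some `Q` disjoint from `Z`.
This is Pajor's inequality for the complementary family, which does not shatter `Zᶜ`. -/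
lemma card_strongly_shattered_le {ι : Type*} [Fintype ι] [DecidableEq ι]
    (𝒢 𝒵 : Finset (Finset ι))
    (h : ∀ Z ∈ 𝒵, ∃ Q, Disjoint Q Z ∧ ∀ Y ⊆ Z, Q ∪ Y ∈ 𝒢) : 𝒵.card ≤ 𝒢.card := by
  have h1 := Finset.card_le_card_shatterer 𝒢ᶜ
  have h2 : Disjoint (𝒵.image compl) (𝒢ᶜ).shatterer := by
    rw [Finset.disjoint_left]
    intro S hS hsh
    obtain ⟨Z, hZ, rfl⟩ := Finset.mem_image.1 hS
    obtain ⟨Q, hQ, hc⟩ := h Z hZ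
    obtain ⟨u, hu, hue⟩ := (Finset.mem_shatterer.1 hsh)
      (fun i hi => Finset.mem_compl.2 (Finset.disjoint_left.1 hQ hi) : Q ⊆ Zᶜ)
    refine Finset.mem_compl.1 hu ?_
    have : u = Q ∪ (Z ∩ u) := by
      rw [← hue, ← Finset.union_inter_distrib_right, Finset.union_comm, Finset.union_compl,
        Finset.univ_inter]
    rw [this]
    exact hc _ Finset.inter_subset_left
  have h3 := Finset.card_le_univ (𝒵.image compl ∪ (𝒢ᶜ).shatterer)
  rw [Finset.card_union_of_disjoint h2, Finset.card_image_of_injective _ compl_injective] at h3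
  have h4 := Finset.card_add_card_compl 𝒢
  omega

open Classical in
/-- Fix a set `R` of `d - 6` coordinates. There are at least `C(d + 6, 3)` nearly balanced patterns
off `R` that can be combined with arbitrary signs on `R`, since all triples off `R` are strongly
shattered by these patterns; `L` bounds from below the number of ways to make one balanced. -/
lemma choose_mul_le_card_balanced {ι : Type*} [Fintype ι] (d : ℕ) (hd : 10 ≤ d)
    (hcard : Fintype.card ι = 2 * d) (W : Submodule ℝ (ι → ℝ))
    (H1 : ∀ Z : Finset ι, Z.card ≤ d - 1 → ∀ ζ : ι → ℝ, ∃ x ∈ W, ∀ i ∈ Z, x i = ζ i)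
    (H2 : ∀ x ∈ W, x ≠ 0 → (Finset.univ.filter fun i => x i = 0).card ≤ d - 1)
    (L : ℕ) (hL : ∀ j, (d - 6) / 2 ≤ j + 1 → j ≤ (d - 6) / 2 + 2 → L ≤ (d - 6).choose j) :
    L * (d + 6).choose 3 ≤
      (Finset.univ.filter fun P : Finset ι => P.card = d ∧ Realizable W P).card := by
  obtain ⟨R, -, hR⟩ := Finset.exists_subset_card_eq (s := (Finset.univ : Finset ι)) (n := d - 6)
    (by rw [Finset.card_univ]; omega)
  have hRc : Rᶜ.card = d + 6 := by rw [Finset.card_compl]; omega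
  let 𝒢 : Finset (Finset ι) := Finset.univ.filter fun Q => Disjoint Q R ∧ (d + 3) / 2 ≤ Q.card ∧
    Q.card ≤ (d + 3) / 2 + 3 ∧ ∀ U ⊆ R, Realizable W (Q ∪ U)
  have h𝒢 : (d + 6).choose 3 ≤ 𝒢.card := by
    rw [← hRc, ← Finset.card_powersetCard]
    refine card_strongly_shattered_le 𝒢 _ fun Z hZ => ?_
    rw [Finset.mem_powersetCard] at hZ
    have hZR : Disjoint Z R := Finset.disjoint_left.2 fun i hi => Finset.mem_compl.1 (hZ.1 hi)
    obtain ⟨Q, hQ, hQc, hQr⟩ := exists_balanced_cube d (by omega) hcard W H1 H2 (Z ∪ R)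
      (by rw [Finset.card_union_of_disjoint hZR]; omega)
    rw [Finset.disjoint_union_right] at hQ
    refine ⟨Q, hQ.1, fun Y hY => Finset.mem_filter.2 ⟨Finset.mem_univ _, ?_, ?_, ?_, ?_⟩⟩
    · exact Finset.disjoint_union_left.2 ⟨hQ.2, hZR.mono_left hY⟩
    · rw [← hQc]
      exact Finset.card_le_card Finset.subset_union_left
    · refine (Finset.card_union_le _ _).trans ?_
      have := Finset.card_le_card hY
      omega
    · intro U hU
      rw [Finset.union_assoc]
      exact hQr _ (Finset.union_subset_union hY hU)
  set F := Finset.univ.filter fun P : Finset ι => P.card = d ∧ Realizable W P with hF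
  refine (Nat.mul_le_mul_left L h𝒢).trans ?_
  have hfib : ∀ Q ∈ 𝒢, L ≤ ((F.filter fun P => P \ R ∈ 𝒢).filter fun P => P \ R = Q).card := by
    intro Q hQ
    obtain ⟨-, hQR, hQ1, hQ2, hQr⟩ := Finset.mem_filter.1 hQ
    refine (hL (d - Q.card) (by omega) (by omega)).trans ?_
    rw [← hR, ← Finset.card_powersetCard]
    refine Finset.card_le_card_of_injOn (fun U => Q ∪ U) ?_ ?_
    · intro U hU
      obtain ⟨hUR, hUc⟩ := Finset.mem_powersetCard.1 (Finset.mem_coe.1 hU)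
      have e : (Q ∪ U) \ R = Q := by
        rw [Finset.union_sdiff_distrib, Finset.sdiff_eq_self_of_disjoint hQR,
          Finset.sdiff_eq_empty_iff_subset.2 hUR, Finset.union_empty]
      simp only [Finset.coe_filter, Set.mem_ofPred_eq, Finset.mem_filter, hF, Finset.mem_univ,
        true_and, e]
      refine ⟨⟨⟨?_, hQr U hUR⟩, hQ⟩, trivial⟩
      rw [Finset.card_union_of_disjoint (hQR.mono_right hUR)]
      omega
    · intro U hU U' hU' hUU'
      have hU := (Finset.mem_powersetCard.1 (Finset.mem_coe.1 hU)).1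
      have hU' := (Finset.mem_powersetCard.1 (Finset.mem_coe.1 hU')).1
      have e : ∀ {U}, U ⊆ R → (Q ∪ U) ∩ R = U := fun {U} h => by
        rw [Finset.union_inter_distrib_right, Finset.disjoint_iff_inter_eq_empty.1 hQR,
          Finset.empty_union, Finset.inter_eq_left.2 h]
      rw [← e hU, ← e hU']
      exact congrArg (· ∩ R) hUU'
  exact (Finset.mul_card_image_le_card_of_maps_to
    (fun P hP => (Finset.mem_filter.1 hP).2) L hfib).trans (Finset.card_filter_le _ _)

/-! ### Affine dependences of points in general position -/

/-- The affine dependences of `V`: weights on `V` with sum zero whose weighted sum of points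
vanishes. -/
def dependences (d : ℕ) (V : Finset (Pt d)) : Submodule ℝ (V → ℝ) where
  carrier := {x | ∑ v, x v = 0 ∧ ∑ v, x v • (v : Pt d) = 0}
  zero_mem' := by simp
  add_mem' := by
    rintro x y ⟨h1, h2⟩ ⟨h3, h4⟩
    constructor
    · simp only [Pi.add_apply, Finset.sum_add_distrib, h1, h3, add_zero]
    · simp only [Pi.add_apply, add_smul, Finset.sum_add_distrib, h2, h4, add_zero]
  smul_mem' := by
    rintro c x ⟨h1, h2⟩
    constructor
    · simp only [Pi.smul_apply, smul_eq_mul, ← Finset.mul_sum, h1, mul_zero]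
    · simp only [Pi.smul_apply, smul_eq_mul, mul_smul, ← Finset.smul_sum, h2, smul_zero]

lemma GenPos.affineIndependent {d : ℕ} {V : Finset (Pt d)} (hV : GenPos d V) (S : Finset V)
    (hS : S.card ≤ d + 1) : AffineIndependent ℝ (fun s : S => ((s : V) : Pt d)) := by
  have h := hV (S.map (Function.Embedding.subtype _)) (fun x hx => by
    obtain ⟨y, -, rfl⟩ := Finset.mem_map.1 hx
    exact y.2) (by rwa [Finset.card_map])
  let e : S ↪ {x // x ∈ ((S.map (Function.Embedding.subtype _) : Finset (Pt d)) : Set (Pt d))} :=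
    ⟨fun s => ⟨((s : V) : Pt d), Finset.mem_coe.2 (Finset.mem_map_of_mem _ s.2)⟩,
      fun a b hab => Subtype.ext (Subtype.ext (Subtype.mk.inj hab))⟩
  exact h.comp_embedding e

/-- In general position the values of an affine dependence on at most `d - 1` of the `2d` points
are arbitrary: the other points contain an affine basis of `ℝ^d`. -/
lemma exists_dependence {d : ℕ} (hd : 3 ≤ d) {V : Finset (Pt d)} (hV : GenPos d V)
    (hcard : V.card = 2 * d) (Z : Finset V) (hZ : Z.card ≤ d - 1) (ζ : V → ℝ) :
    ∃ x ∈ dependences d V, ∀ i ∈ Z, x i = ζ i := by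
  classical
  obtain ⟨S, hS, hSc⟩ := Finset.exists_subset_card_eq (s := Zᶜ) (n := d + 1) (by
    rw [Finset.card_compl, Fintype.card_coe]; omega)
  have hind := hV.affineIndependent S hSc.le
  have htop : affineSpan ℝ (Set.range fun s : S => ((s : V) : Pt d)) = ⊤ := by
    rw [hind.affineSpan_eq_top_iff_card_eq_finrank_add_one]
    simp [hSc]
  let b : AffineBasis S ℝ (Pt d) := ⟨fun s : S => ((s : V) : Pt d), hind, htop⟩
  have hb : ∀ p : Pt d, ∑ s : S, b.coord s p • ((s : V) : Pt d) = p :=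
    fun p => b.linear_combination_coord_eq_self p
  have hb1 : ∀ p : Pt d, ∑ s : S, b.coord s p = 1 := fun p => b.sum_coord_apply_eq_one p
  let c : V → ℝ := fun v => if h : v ∈ S then -∑ z ∈ Z, ζ z * b.coord ⟨v, h⟩ z else 0
  have hdisj : ∀ i ∈ Z, i ∉ S := fun i hi hiS => Finset.mem_compl.1 (hS hiS) hi
  have hcS : ∀ s : S, c s = -∑ z ∈ Z, ζ z * b.coord s z := fun s => by simp [c]
  have hsum : ∀ {M : Type} [AddCommGroup M] [Module ℝ M] (f : V → M),
      ∑ v, ((if v ∈ Z then ζ v else 0) + c v) • f v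
        = ∑ z ∈ Z, ζ z • f z + ∑ s : S, c s • f s := by
    intro M _ _ f
    simp only [add_smul, Finset.sum_add_distrib, ite_smul, zero_smul, Finset.sum_ite_mem,
      Finset.univ_inter]
    congr 1
    rw [Finset.sum_coe_sort S (fun v => c v • f v)]
    refine (Finset.sum_subset (Finset.subset_univ S) fun v _ hv => ?_).symm
    simp [c, hv]
  refine ⟨fun v => (if v ∈ Z then ζ v else 0) + c v, ⟨?_, ?_⟩, fun i hi => ?_⟩
  · have := hsum (fun _ => (1 : ℝ))
    simp only [smul_eq_mul, mul_one] at this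
    rw [this]
    simp only [hcS, Finset.sum_neg_distrib]
    rw [Finset.sum_comm]
    simp only [← Finset.mul_sum, hb1, mul_one, add_neg_cancel]
  · rw [hsum (fun v => (v : Pt d))]
    simp only [hcS, neg_smul, Finset.sum_neg_distrib, Finset.sum_smul]
    rw [Finset.sum_comm]
    simp only [mul_smul, ← Finset.smul_sum, hb, add_neg_cancel]
  · simp [hi, c, hdisj i hi]

lemma card_zeros_dependence {d : ℕ} {V : Finset (Pt d)} (hV : GenPos d V)
    (hcard : V.card = 2 * d) (x : V → ℝ) (hx : x ∈ dependences d V) (hx0 : x ≠ 0) :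
    (Finset.univ.filter fun i => x i = 0).card ≤ d - 1 := by
  classical
  by_contra hlt
  have hsplit := Finset.card_filter_add_card_filter_not (s := (Finset.univ : Finset V))
    (fun i => x i = 0)
  rw [Finset.card_univ, Fintype.card_coe, hcard] at hsplit
  set S := Finset.univ.filter fun i => ¬ x i = 0 with hS
  have hind := affineIndependent_iff.1 (hV.affineIndependent S (by omega)) Finset.univ
    (fun s => x s)
  obtain ⟨h1, h2⟩ := hx
  have hsub : ∀ {M : Type} [AddCommGroup M] [Module ℝ M] (f : V → M),
      ∑ s : S, x s • f s = ∑ v, x v • f v := by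
    intro M _ _ f
    rw [Finset.sum_coe_sort S (fun v => x v • f v)]
    refine Finset.sum_subset (Finset.subset_univ S) fun v _ hv => ?_
    have : x v = 0 := by simpa [hS] using hv
    simp [this]
  have hz := hind (by have := hsub (fun _ => (1 : ℝ)); simp only [smul_eq_mul, mul_one] at this
                      rw [this, h1])
    (by rw [hsub (fun v => (v : Pt d)), h2])
  refine hx0 (funext fun v => ?_)
  by_contra hv
  exact hv (hz ⟨v, by simpa [hS] using hv⟩ (Finset.mem_univ _))

/-! ### From sign patterns to crossing pairs -/

lemma sum_mem_intrinsicInterior {d : ℕ} (B : Finset (Pt d)) (w : Pt d → ℝ)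
    (hw : ∀ p ∈ B, 0 < w p) (hw1 : ∑ p ∈ B, w p = 1) :
    ∑ p ∈ B, w p • p ∈ intrinsicInterior ℝ (convexHull ℝ (B : Set (Pt d))) := by
  set K := convexHull ℝ (B : Set (Pt d)) with hK
  set x := ∑ p ∈ B, w p • p with hx
  have hKc : Convex ℝ K := convex_convexHull _ _
  have hBne : B.Nonempty := by
    rw [Finset.nonempty_iff_ne_empty]
    rintro rfl
    simp at hw1
  have hxK : x ∈ K := by
    rw [hK, Finset.mem_convexHull']
    exact ⟨w, fun p hp => (hw p hp).le, hw1, rfl⟩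
  obtain ⟨y, hy⟩ := Set.Nonempty.intrinsicInterior hKc ⟨x, hxK⟩
  have hyK : y ∈ K := intrinsicInterior_subset hy
  obtain ⟨y', hy', rfl⟩ := mem_intrinsicInterior.1 hy
  obtain ⟨v, hv0, hv1, hvy⟩ := Finset.mem_convexHull'.1 hyK
  -- the segment from `y'` to `x` can be prolonged inside `K` beyond `x`, up to a point `z`
  obtain ⟨ε, hε, hεw⟩ : ∃ ε : ℝ, 0 < ε ∧ ∀ p ∈ B, ε ≤ w p := by
    obtain ⟨q, hq, hqm⟩ := B.exists_min_image w hBne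
    exact ⟨w q, hw q hq, hqm⟩
  set z : Pt d := (1 + ε) • x - ε • (y' : Pt d) with hz
  have hzK : z ∈ K := by
    rw [hK, Finset.mem_convexHull']
    refine ⟨fun p => (1 + ε) * w p - ε * v p, fun p hp => ?_, ?_, ?_⟩
    · have hvp : v p ≤ 1 := by
        rw [← hv1]
        exact Finset.single_le_sum hv0 hp
      have := hεw p hp
      have := hw p hp
      nlinarith
    · rw [Finset.sum_sub_distrib, ← Finset.mul_sum, ← Finset.mul_sum, hw1, hv1]
      ring
    · simp only [sub_smul, mul_smul, Finset.sum_sub_distrib, ← Finset.smul_sum]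
      rw [hvy, hz, hx]
  -- the homothety with centre `z` taking `x` to `y'` pulls a neighbourhood of `y'` inside `K`
  -- back to a neighbourhood of `x` inside `K`
  set r : ℝ := (1 + ε) / ε with hr
  have hr0 : 0 < r := by positivity
  have hr1 : 1 < r := by rw [hr, lt_div_iff₀ hε]; linarith
  let ψ : affineSpan ℝ K → affineSpan ℝ K := fun p =>
    ⟨AffineMap.lineMap z (p : Pt d) r,
      AffineMap.lineMap_mem r (subset_affineSpan ℝ K hzK) p.2⟩
  have hψ : Continuous ψ := by
    refine Continuous.subtype_mk ?_ _
    simp only [AffineMap.lineMap_apply]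
    fun_prop
  refine mem_intrinsicInterior.2 ⟨⟨x, subset_affineSpan ℝ K hxK⟩, ?_, rfl⟩
  refine interior_maximal (t := ψ ⁻¹' interior ((↑) ⁻¹' K)) ?_ (isOpen_interior.preimage hψ) ?_
  · intro p hp
    have hpK : AffineMap.lineMap z (p : Pt d) r ∈ K :=
      interior_subset (s := ((↑) ⁻¹' K : Set (affineSpan ℝ K))) hp
    have := hKc hpK hzK (a := r⁻¹) (b := 1 - r⁻¹) (by positivity)
      (by rw [sub_nonneg]; exact inv_le_one_of_one_le₀ hr1.le) (by ring)
    change (p : Pt d) ∈ K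
    convert this using 1
    rw [AffineMap.lineMap_apply_module, smul_add, smul_smul, smul_smul, inv_mul_cancel₀ hr0.ne',
      one_smul, mul_sub, inv_mul_cancel₀ hr0.ne', sub_smul, sub_smul, mul_one]
    abel
  · suffices h : ψ ⟨x, subset_affineSpan ℝ K hxK⟩ = y' by
      rw [Set.mem_preimage, h]
      exact hy'
    ext1
    change AffineMap.lineMap z x r = (y' : Pt d)
    have hrε : r * ε = 1 + ε := by rw [hr]; field_simp
    rw [AffineMap.lineMap_apply_module, hz]
    have e : (1 - r) • ((1 + ε) • x - ε • (y' : Pt d)) + r • x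
        = (1 + ε - r * ε) • x + (r * ε - ε) • (y' : Pt d) := by module
    rw [e, hrε]
    simp

open Classical in
lemma crossing_of_realizable {d : ℕ} {V : Finset (Pt d)} (P : Finset V)
    (hne : P.Nonempty) (hP : Realizable (dependences d V) P) :
    CrossingPair d (P.map (Function.Embedding.subtype _))
      (Pᶜ.map (Function.Embedding.subtype _)) := by
  obtain ⟨x, ⟨h1, h2⟩, hx⟩ := hP
  refine ⟨(Finset.disjoint_map _).2 disjoint_compl_right, ?_⟩
  rw [← Finset.sum_add_sum_compl P] at h1 h2
  set s := ∑ i ∈ P, x i with hs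
  have hs0 : 0 < s := Finset.sum_pos (fun i hi => (hx i).1 hi) hne
  let w : Pt d → ℝ := fun p => if h : p ∈ V then x ⟨p, h⟩ / s else 0
  have hwv : ∀ i : V, w i = x i / s := fun i => by simp [w]
  have m1 := sum_mem_intrinsicInterior (P.map (Function.Embedding.subtype _)) w
    (by
      intro p hp
      obtain ⟨i, hi, rfl⟩ := Finset.mem_map.1 hp
      exact (hwv i).symm ▸ div_pos ((hx i).1 hi) hs0)
    (by
      rw [Finset.sum_map]
      simp only [Function.Embedding.subtype_apply, hwv]
      rw [← Finset.sum_div, div_self hs0.ne'])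
  have m2 := sum_mem_intrinsicInterior (Pᶜ.map (Function.Embedding.subtype _)) (fun p => -w p)
    (by
      intro p hp
      obtain ⟨i, hi, rfl⟩ := Finset.mem_map.1 hp
      have : w i < 0 := (hwv i).symm ▸ div_neg_of_neg_of_pos
        ((hx i).2 (Finset.mem_compl.1 hi)) hs0
      exact neg_pos.2 this)
    (by
      rw [Finset.sum_map]
      simp only [Function.Embedding.subtype_apply, hwv, Finset.sum_neg_distrib]
      rw [← Finset.sum_div, ← neg_div, ← eq_neg_of_add_eq_zero_left h1, div_self hs0.ne'])
  refine ⟨_, m1, ?_⟩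
  convert m2 using 1
  simp only [Finset.sum_map, Function.Embedding.subtype_apply, hwv, neg_smul,
    Finset.sum_neg_distrib, div_eq_inv_mul, mul_smul, ← Finset.smul_sum]
  rw [← smul_neg, ← eq_neg_of_add_eq_zero_left h2]

open Classical in
/-- Each crossing pair `{B, C}` comes from at most two sign patterns, one with positive part `B`
and one with positive part `C`. -/
lemma card_balanced_le {d : ℕ} (hd : 3 ≤ d) {V : Finset (Pt d)} (hcard : V.card = 2 * d) :
    (Finset.univ.filter fun P : Finset V =>
      P.card = d ∧ Realizable (dependences d V) P).card
      ≤ 2 * (crossingHyperedgePairs d V).ncard := by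
  set F := Finset.univ.filter fun P : Finset V => P.card = d ∧ Realizable (dependences d V) P
    with hF
  let e : Finset V → Finset (Pt d) := fun P => P.map (Function.Embedding.subtype _)
  have he : Function.Injective e := Finset.map_injective _
  have heV : ∀ P, e P ⊆ V := fun P p hp => by
    obtain ⟨i, -, rfl⟩ := Finset.mem_map.1 hp
    exact i.2
  let f : Finset V → Sym2 (Finset (Pt d)) := fun P => s(e P, e Pᶜ)
  have hfin : (crossingHyperedgePairs d V).Finite := by
    refine (V.powerset.sym2.finite_toSet).subset ?_
    rintro p ⟨B, C, rfl, hB, hC, -⟩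
    simp [hB, hC]
  have hsub : ((F.image f : Finset _) : Set _) ⊆ crossingHyperedgePairs d V := by
    intro p hp
    obtain ⟨P, hP, rfl⟩ := Finset.mem_image.1 (Finset.mem_coe.1 hp)
    obtain ⟨-, hPc, hPr⟩ := Finset.mem_filter.1 hP
    refine ⟨e P, e Pᶜ, rfl, heV _, heV _, by simpa [e] using hPc, ?_,
      crossing_of_realizable P (Finset.card_pos.1 (by omega)) hPr⟩
    simp only [e, Finset.card_map, Finset.card_compl, Fintype.card_coe]
    omega
  have h1 : F.card ≤ 2 * (F.image f).card := by
    refine Finset.card_le_mul_card_image F 2 fun p hp => ?_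
    obtain ⟨P, hP, rfl⟩ := Finset.mem_image.1 hp
    refine (Finset.card_le_card (t := {P, Pᶜ}) fun Q hQ => ?_).trans Finset.card_le_two
    have hQ := (Finset.mem_filter.1 hQ).2
    simp only [f, Sym2.eq_iff] at hQ
    rw [Finset.mem_insert, Finset.mem_singleton]
    exact hQ.imp (fun h => he h.1) (fun h => he h.1)
  refine h1.trans (Nat.mul_le_mul_left 2 ?_)
  rw [← Set.ncard_coe_finset]
  exact Set.ncard_le_ncard hsub hfin

/-! ### Numerical estimates -/

/-- The binomial coefficients `C(n, j)` with `j` close to `n / 2` have a common lower bound of the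
order of `2^n / n`. -/
lemma exists_near_central_bound (n : ℕ) (hn : 4 ≤ n) : ∃ L : ℕ, 2 ^ n ≤ 8 * (n + 1) * L ∧
    ∀ j, n / 2 ≤ j + 1 → j ≤ n / 2 + 2 → L ≤ n.choose j := by
  set M := n.choose (n / 2) with hM
  have hsum : 2 ^ n ≤ (n + 1) * M := by
    rw [← Nat.sum_range_choose n]
    refine (Finset.sum_le_card_nsmul _ _ M fun i _ => Nat.choose_le_middle i n).trans ?_
    simp
  have key : ∀ j, n / 2 ≤ j + 1 → j ≤ n / 2 + 2 → M ≤ 8 * n.choose j := by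
    intro j h1 h2
    obtain ⟨b, hb⟩ : ∃ b, n / 2 = b + 1 := ⟨n / 2 - 1, by omega⟩
    have e0 := Nat.choose_succ_right_eq n b
    have e1 := Nat.choose_succ_right_eq n (b + 1)
    have e2 := Nat.choose_succ_right_eq n (b + 2)
    rw [hb] at hM h1 h2
    have f0 : M ≤ 3 * n.choose b := by
      have : n - b ≤ 3 * (b + 1) := by omega
      rw [← hM] at e0
      nlinarith [Nat.mul_le_mul_left (n.choose b) this]
    have f1 : M ≤ 2 * n.choose (b + 2) := by
      have : b + 1 + 1 ≤ 2 * (n - (b + 1)) := by omega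
      rw [← hM] at e1
      nlinarith [Nat.mul_le_mul_left M this]
    have f2 : n.choose (b + 2) ≤ 4 * n.choose (b + 3) := by
      have : b + 2 + 1 ≤ 4 * (n - (b + 2)) := by omega
      nlinarith [Nat.mul_le_mul_left (n.choose (b + 2)) this]
    have hj : j = b ∨ j = b + 1 ∨ j = b + 2 ∨ j = b + 3 := by omega
    rcases hj with rfl | rfl | rfl | rfl <;> omega
  refine ⟨(M + 7) / 8, ?_, fun j h1 h2 => ?_⟩
  · have : M ≤ 8 * ((M + 7) / 8) := by omega
    calc 2 ^ n ≤ (n + 1) * M := hsum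
      _ ≤ (n + 1) * (8 * ((M + 7) / 8)) := Nat.mul_le_mul_left _ this
      _ = _ := by ring
  · have := key j h1 h2
    omega

lemma rpow_le_of_bounds {d L N : ℕ} (hd : 6 ≤ d) (hL : 2 ^ (d - 6) ≤ 8 * (d - 6 + 1) * L)
    (hN : L * (d + 6).choose 3 ≤ N) :
    (2 : ℝ) ^ d * (d : ℝ) ^ ((3 : ℝ) / 2) ≤ 3072 * N := by
  have hd1 : (1 : ℝ) ≤ d := by exact_mod_cast (by omega : 1 ≤ d)
  have e1 : (d : ℝ) ^ ((3 : ℝ) / 2) ≤ (d : ℝ) ^ 2 := by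
    rw [← Real.rpow_natCast]
    exact Real.rpow_le_rpow_of_exponent_le hd1 (by norm_num)
  have e2 : 2 ^ d ≤ 512 * d * L := by
    calc 2 ^ d = 64 * 2 ^ (d - 6) := by
          rw [show (64 : ℕ) = 2 ^ 6 by norm_num, ← pow_add]
          congr 1
          omega
      _ ≤ 64 * (8 * (d - 6 + 1) * L) := Nat.mul_le_mul_left _ hL
      _ ≤ 64 * (8 * d * L) := by gcongr; omega
      _ = _ := by ring
  have e3 : d ^ 3 ≤ 6 * (d + 6).choose 3 := by
    have := Nat.pow_sub_le_descFactorial (d + 6) 3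
    rw [Nat.descFactorial_eq_factorial_mul_choose] at this
    exact (Nat.pow_le_pow_left (by omega) 3).trans this
  have e4 : 2 ^ d * d ^ 2 ≤ 3072 * N := by
    calc 2 ^ d * d ^ 2 ≤ (512 * d * L) * d ^ 2 := Nat.mul_le_mul_right _ e2
      _ = 512 * L * d ^ 3 := by ring
      _ ≤ 512 * L * (6 * (d + 6).choose 3) := Nat.mul_le_mul_left _ e3
      _ = 3072 * (L * (d + 6).choose 3) := by ring
      _ ≤ 3072 * N := Nat.mul_le_mul_left _ hN
  calc (2 : ℝ) ^ d * (d : ℝ) ^ ((3 : ℝ) / 2) ≤ (2 : ℝ) ^ d * (d : ℝ) ^ 2 := by gcongr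
    _ ≤ _ := by exact_mod_cast e4

/-- If the `2d` vertices of `K_{2d}^d` are in general position but not in convex
position, there are `Ω(2^d d^{3/2})` crossing pairs of hyperedges. -/
theorem crossing_number_nonconvex_lower_bound :
    ∃ (c : ℝ) (d₀ : ℕ), 0 < c ∧
      ∀ d : ℕ, d₀ ≤ d → ∀ V : Finset (Pt d), V.card = 2 * d → GenPos d V →
        (∃ v ∈ V, v ∈ convexHull ℝ ((V : Set (Pt d)) \ {v})) →
        c * 2 ^ d * (d : ℝ) ^ ((3 : ℝ) / 2) ≤
          ((crossingHyperedgePairs d V).ncard : ℝ) := by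
  refine ⟨1 / 6144, 10, by norm_num, fun d hd V hcard hV _ => ?_⟩
  have h3 : 3 ≤ d := by omega
  obtain ⟨L, hL1, hL2⟩ := exists_near_central_bound (d - 6) (by omega)
  have h1 := choose_mul_le_card_balanced d (by omega) (by rw [Fintype.card_coe, hcard])
    (dependences d V) (exists_dependence h3 hV hcard) (card_zeros_dependence hV hcard) L hL2
  have h2 := rpow_le_of_bounds (by omega) hL1 (h1.trans (card_balanced_le h3 hcard))
  push_cast at h2
  linarith
end
end
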